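/- The ∃∀-theory of finite nice bipartite posets is undecidable: the set of ∃∀-sentences in the language of posets that are true in every finite nice bipartite poset is not decidable. -/

import Mathlib

open FirstOrder FirstOrder.Language

attribute [local instance] FirstOrder.Language.orderStructure

universe u u' v v' w w'

/-! ### A fixed computable Gödel encoding of sentences in the language of posets -/

instance (n : ℕ) : Encodable (Language.order.Functions n) := inferInstanceAs (Encodable Empty)

instance : Encodable (Σ i, Language.order.Functions i) := Sigma.encodable

instance : Encodable (Σ n, Language.order.Relations n) :=
  Encodable.ofEquiv Unit (Equiv.equivPUnit.{1,1} _)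

instance : Encodable (Σ n, Language.order.BoundedFormula Empty n) :=
  Encodable.ofLeftInjection
    (fun φ => φ.2.listEncode)
    (fun l => (BoundedFormula.listDecode l)[0]?)
    BoundedFormula.encoding.decode_encode

instance : Encodable Language.order.Sentence :=
  Encodable.ofLeftInjection (fun φ => (⟨0, φ⟩ : Σ n, Language.order.BoundedFormula Empty n))
    (fun ψ => match ψ with | ⟨0, φ⟩ => some φ | _ => none)
    (fun _ => rfl)

/-! ### Free lattices, bipartite posets, join covers -/

/-- `ι : X → F` realizes `F` as a free lattice on the set `X`: every map from `X`
to a lattice extends uniquely to a lattice homomorphism on `F`. -/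
def IsFreeLatticeOn {X : Type u} {F : Type v} [Lattice F] (ι : X → F) : Prop :=
  ∀ (L : Type w) [Lattice L] (f : X → L), ∃! h : LatticeHom F L, ∀ x : X, h (ι x) = f x

/-- A bipartite poset: every element is maximal or minimal. -/
def IsBipartitePoset (Q : Type*) [PartialOrder Q] : Prop :=
  ∀ q : Q, IsMax q ∨ IsMin q

/-- A nice bipartite poset (the maximal elements form the top part `A`, the
non-maximal (hence minimal) elements the bottom part `B`): both parts have at
least three elements, every `a ∈ A` is strictly above at least two elements of `B`
and fails to be above at least one element of `B`, and dually for `B`. -/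
def IsNiceBipartitePoset (Q : Type*) [PartialOrder Q] : Prop :=
  IsBipartitePoset Q ∧
  (∃ a₁ a₂ a₃ : Q, IsMax a₁ ∧ IsMax a₂ ∧ IsMax a₃ ∧ a₁ ≠ a₂ ∧ a₁ ≠ a₃ ∧ a₂ ≠ a₃) ∧
  (∃ b₁ b₂ b₃ : Q, ¬IsMax b₁ ∧ ¬IsMax b₂ ∧ ¬IsMax b₃ ∧ b₁ ≠ b₂ ∧ b₁ ≠ b₃ ∧ b₂ ≠ b₃) ∧
  (∀ a : Q, IsMax a →
    (∃ b₁ b₂ : Q, ¬IsMax b₁ ∧ ¬IsMax b₂ ∧ b₁ ≠ b₂ ∧ b₁ < a ∧ b₂ < a) ∧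
    (∃ b : Q, ¬IsMax b ∧ ¬ b ≤ a)) ∧
  (∀ b : Q, ¬IsMax b →
    (∃ a₁ a₂ : Q, IsMax a₁ ∧ IsMax a₂ ∧ a₁ ≠ a₂ ∧ b < a₁ ∧ b < a₂) ∧
    (∃ a : Q, IsMax a ∧ ¬ b ≤ a))

section JoinCovers

variable {L : Type*} [Lattice L]

/-- `S` is a join cover of `p`: a finite (nonempty) subset with `p ≤ sup S`. -/
def IsJoinCover (p : L) (S : Finset L) : Prop :=
  ∃ hS : S.Nonempty, p ≤ S.sup' hS id

/-- A join cover is nontrivial if `p ≰ s` for every `s ∈ S`. -/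
def IsNontrivialJoinCover (p : L) (S : Finset L) : Prop :=
  IsJoinCover p S ∧ ∀ s ∈ S, ¬ p ≤ s

/-- `S` refines `T` if every element of `S` lies below some element of `T`. -/
def FinsetRefines (S T : Finset L) : Prop :=
  ∀ s ∈ S, ∃ t ∈ T, s ≤ t

/-- A join cover `S` of `p` is minimal if every join cover of `p` refining `S` contains `S`. -/
def IsMinimalJoinCover (p : L) (S : Finset L) : Prop :=
  IsJoinCover p S ∧ ∀ T : Finset L, IsJoinCover p T → FinsetRefines T S → S ⊆ T

/-- A join cover `S` of `p` is doubly minimal if it is minimal, nontrivial, and any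
nontrivial join cover of `p` whose join is below the join of `S` has the same join. -/
def IsDoublyMinimalJoinCover (p : L) (S : Finset L) : Prop :=
  IsMinimalJoinCover p S ∧ IsNontrivialJoinCover p S ∧
  ∀ (T : Finset L) (hT : T.Nonempty) (hS : S.Nonempty), IsNontrivialJoinCover p T →
    T.sup' hT id ≤ S.sup' hS id → T.sup' hT id = S.sup' hS id

/-- `ERel p q` : `p ≠ q` and `q` belongs to some doubly minimal join cover of `p`. -/
def ERel (p q : L) : Prop :=
  p ≠ q ∧ ∃ S : Finset L, IsDoublyMinimalJoinCover p S ∧ q ∈ S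

/-- A subset `Y` of a lattice is independent if no member is below the join, nor above
the meet, of a finite nonempty subset of `Y` not containing it. -/
def IsIndependentSubset (Y : Set L) : Prop :=
  ∀ y ∈ Y, ∀ Z : Finset L, ↑Z ⊆ Y \ {y} → ∀ hZ : Z.Nonempty,
    ¬ y ≤ Z.sup' hZ id ∧ ¬ Z.inf' hZ id ≤ y

end JoinCovers

/-- The standard embedding `ξ` of a finite poset `Q`, included in a set `X` via `j`, into
a lattice `F` equipped with `ι : X → F`: `ξ q = inf { ι (j q') : q' ∈ Q, q' ≥ q }`. -/
noncomputable def xiMap {Q : Type u} [PartialOrder Q] [Fintype Q] {X : Type u'} (j : Q → X)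
    {F : Type v} [Lattice F] (ι : X → F) (q : Q) : F := by
  classical
  exact (Finset.univ.filter fun q' : Q => q ≤ q').inf'
    ⟨q, Finset.mem_filter.mpr ⟨Finset.mem_univ q, le_refl q⟩⟩ fun q' => ι (j q')

/-- The word `w_Q` associated to a finite nice bipartite poset `Q`:
`w_Q = ⋀_{a ∈ max Q} (ξ a ⊔ ⋁ { ξ b : b ∈ min Q, b ≰ a })`. -/
noncomputable def wQ {Q : Type u} [PartialOrder Q] [Fintype Q] {X : Type u'} (j : Q → X)
    {F : Type v} [Lattice F] (ι : X → F) (hQ : IsNiceBipartitePoset Q) : F := by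
  classical
  have hA : (Finset.univ.filter fun a : Q => IsMax a).Nonempty := by
    obtain ⟨a₁, -, -, h₁, -⟩ := hQ.2.1
    exact ⟨a₁, Finset.mem_filter.mpr ⟨Finset.mem_univ _, h₁⟩⟩
  have hB : ∀ a : Q, (Finset.univ.filter fun b : Q => ¬ IsMax b ∧ ¬ b ≤ a).Nonempty := by
    intro a
    by_cases hmax : IsMax a
    · obtain ⟨b, hb1, hb2⟩ := (hQ.2.2.2.1 a hmax).2
      exact ⟨b, Finset.mem_filter.mpr ⟨Finset.mem_univ _, hb1, hb2⟩⟩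
    · have hmin : IsMin a := (hQ.1 a).resolve_left hmax
      obtain ⟨b₁, b₂, b₃, h1, h2, h3, h12, h13, h23⟩ := hQ.2.2.1
      rcases eq_or_ne b₁ a with rfl | hne
      · refine ⟨b₂, Finset.mem_filter.mpr ⟨Finset.mem_univ _, h2, fun hle => ?_⟩⟩
        exact h12 (le_antisymm (hmin hle) hle)
      · refine ⟨b₁, Finset.mem_filter.mpr ⟨Finset.mem_univ _, h1, fun hle => ?_⟩⟩
        exact hne (le_antisymm hle (hmin hle))
  exact (Finset.univ.filter fun a : Q => IsMax a).inf' hA fun a =>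
    xiMap j ι a ⊔
      (Finset.univ.filter fun b : Q => ¬ IsMax b ∧ ¬ b ≤ a).sup' (hB a) (xiMap j ι)

/-- Universally quantify the last `l` (de Bruijn) variables of a bounded formula. -/
def BoundedFormula.allsLast {L : Language} {α : Type*} :
    ∀ {n : ℕ} (l : ℕ), L.BoundedFormula α (n + l) → L.BoundedFormula α n
  | _, 0, ψ => ψ
  | _, l + 1, ψ => BoundedFormula.allsLast l ψ.all

/-- An `∃∀`-sentence in the language of posets: a sentence of the form
`∃ x₁ … x_k ∀ y₁ … y_l, ψ` with `ψ` quantifier-free. -/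
def IsEASentence (φ : Language.order.Sentence) : Prop :=
  ∃ (k l : ℕ) (ψ : Language.order.BoundedFormula Empty (k + l)),
    ψ.IsQF ∧ φ = (BoundedFormula.allsLast l ψ).exs

/-!
A computation can be described by local rules about binary relations on numbers: the pairing
functions, zero, the successor, the order, and the graph of each code. Every rule has
universal-existential form. In a finite structure the order is well-founded, so the rules force
every claimed value of a code to be correct; conversely, the numbers up to a large enough bound
satisfy the rules and contain any given halting computation.

Binary relations are coded in a bipartite poset with the help of constants, which are minimal
elements. The color of an element is the number of constants that lie below it, and a minimal
element is a fact, which relates a source to a target when it lies below both and below the label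
of the relation. Hence the code `c` halts on `n` if and only if some finite nice poset codes a
computation (a universal-existential condition) and contains a chain `0, 1, …, n` with a
value of `c` at `n` (an existential condition). The negation is an `∃∀`-sentence that can be
computed from `n`, because it repeats one block of formulas along the chain.
-/

namespace PosetCoding

open Nat.Partrec (Code)

/-! ### Local computations -/

/-- The binary relation symbols describing a partial recursive computation: arithmetic on numbers
and, for every code `c`, the graph of `c`. The symbol `same` stands for equality. -/
inductive Symbol : Type
  | same | fst | snd | zero | succ | lt
  | eval (c : Code)

/-- A numbering of the relation symbols. -/
def Symbol.idx : Symbol → ℕ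
  | same => 0
  | fst => 1
  | snd => 2
  | zero => 3
  | succ => 4
  | lt => 5
  | eval c => 6 + Encodable.encode c

theorem Symbol.idx_injective : Function.Injective Symbol.idx := by
  intro s t h
  cases s <;> cases t <;> simp only [Symbol.idx] at h <;> first | rfl | omega | skip
  rw [Encodable.encode_injective (Nat.add_left_cancel h)]

section Computation

variable {Q : Type*}

section Definitions

variable (rel : Symbol → Q → Q → Prop)

/-- `c` represents the pair `(a, b)`. -/
def Splits (a b c : Q) : Prop := rel .fst c a ∧ rel .snd c b

/-- `(a, b)` is the pair that comes directly after `(a', b')` in the order in which `Nat.pair`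
enumerates the pairs of numbers. -/
def PairSucc (a' b' a b : Q) : Prop :=
  (a' = b' ∧ rel .zero a a ∧ rel .succ b' b) ∨
  (rel .lt b' a' ∧ a = a' ∧ rel .succ b' b) ∨
  (rel .succ a' b' ∧ a = b' ∧ rel .zero b b) ∨
  (rel .succ a' a ∧ rel .lt a b' ∧ b = b')

/-- The local justification of `c` representing `(a, b)`: either all three are zero, or the
predecessor of `c` represents the pair before `(a, b)`. -/
def PairStep (a b c : Q) : Prop :=
  (rel .zero a a ∧ rel .zero b b ∧ rel .zero c c) ∨
  ∃ c' a' b', rel .succ c' c ∧ Splits rel a' b' c' ∧ PairSucc rel a' b' a b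

/-- What must be witnessed when a code is claimed to send `x` to `y`. -/
def Justified : Code → Q → Q → Prop
  | .zero, _, y => rel .zero y y
  | .succ, x, y => rel .succ x y
  | .left, x, y => ∃ z, Splits rel y z x
  | .right, x, y => ∃ z, Splits rel z y x
  | .pair f g, x, y => ∃ u v, rel (.eval f) x u ∧ rel (.eval g) x v ∧ Splits rel u v y
  | .comp f g, x, y => ∃ u, rel (.eval g) x u ∧ rel (.eval f) u y
  | .prec f g, x, y => ∃ a m, Splits rel a m x ∧
      ((rel .zero m m ∧ rel (.eval f) a y) ∨
        ∃ m' x' i t s, rel .succ m' m ∧ Splits rel a m' x' ∧ rel (.eval (.prec f g)) x' i ∧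
          Splits rel m' i t ∧ Splits rel a t s ∧ rel (.eval g) s y)
  | .rfind' f, x, y => ∃ a m v, Splits rel a m x ∧ rel (.eval f) x v ∧
      ((rel .zero v v ∧ y = m) ∨
        ∃ v' m' x', rel .succ v' v ∧ rel .succ m m' ∧ Splits rel a m' x' ∧
          rel (.eval (.rfind' f)) x' y)

/-- The relations satisfy the local rules of arithmetic and of the evaluation of the codes numbered
up to `e`. All the rules are universal-existential. -/
structure IsComputation (e : ℕ) : Prop where
  lt_irrefl : ∀ x, ¬ rel .lt x x
  lt_trans : ∀ x y z, rel .lt x y → rel .lt y z → rel .lt x z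
  succ_lt : ∀ x y, rel .succ x y → rel .lt x y
  succ_inj : ∀ x x' y, rel .succ x y → rel .succ x' y → x = x'
  zero_not_succ : ∀ x y, rel .zero x x → ¬ rel .succ y x
  lt_step : ∀ x y, rel .lt x y → rel .succ x y ∨ ∃ z, rel .succ z y ∧ rel .lt x z
  pair_step : ∀ a b c, Splits rel a b c → PairStep rel a b c
  justified : ∀ c, Encodable.encode c ≤ e → ∀ x y, rel (.eval c) x y → Justified rel c x y

/-- `num` reads the elements of `Q` as numbers, compatibly with the arithmetical relations. -/
structure IsValuation (num : Q → ℕ) : Prop where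
  zero : ∀ {x}, rel .zero x x → num x = 0
  succ : ∀ {x y}, rel .succ x y → num y = num x + 1
  pair : ∀ {a b c}, Splits rel a b c → num c = Nat.pair (num a) (num b)

/-- Under `num`, the relation assigned to `c` is contained in the graph of `c`. -/
def IsSound (num : Q → ℕ) (c : Code) : Prop :=
  ∀ x y, rel (.eval c) x y → num y ∈ c.eval (num x)

end Definitions

theorem pair_eq_pair_add_one_iff {a b a' b' : ℕ} : Nat.pair a b = Nat.pair a' b' + 1 ↔
    (a' = b' ∧ a = 0 ∧ b = b' + 1) ∨ (b' < a' ∧ a = a' ∧ b = b' + 1) ∨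
      (b' = a' + 1 ∧ a = b' ∧ b = 0) ∨ (a = a' + 1 ∧ a < b' ∧ b = b') := by
  have diagonal (n : ℕ) : Nat.pair 0 (n + 1) = Nat.pair n n + 1 := by
    simp [Nat.pair]; ring
  have row (n m : ℕ) (h : m < n) : Nat.pair n (m + 1) = Nat.pair n m + 1 := by
    rw [Nat.pair, Nat.pair, if_neg (by omega), if_neg (by omega)]; ring
  have corner (n : ℕ) : Nat.pair (n + 1) 0 = Nat.pair n (n + 1) + 1 := by
    rw [Nat.pair, Nat.pair, if_neg (by omega), if_pos (by omega)]; ring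
  have column (n m : ℕ) (h : n + 1 < m) : Nat.pair (n + 1) m = Nat.pair n m + 1 := by
    rw [Nat.pair, Nat.pair, if_pos (by omega), if_pos (by omega)]; ring
  constructor
  · intro h
    rcases lt_trichotomy a' b' with hlt | rfl | hlt
    · rcases Nat.lt_or_ge (a' + 1) b' with hlt' | hge
      · rw [← column _ _ hlt', Nat.pair_eq_pair] at h; omega
      · obtain rfl : b' = a' + 1 := by omega
        rw [← corner, Nat.pair_eq_pair] at h; omega
    · rw [← diagonal, Nat.pair_eq_pair] at h; omega
    · rw [← row _ _ hlt, Nat.pair_eq_pair] at h; omega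
  · rintro (⟨rfl, rfl, rfl⟩ | ⟨h, rfl, rfl⟩ | ⟨rfl, rfl, rfl⟩ | ⟨rfl, h, rfl⟩)
    exacts [diagonal _, row _ _ h, corner _, column _ _ h]

theorem mem_eval_pair {f g : Code} {x u v : ℕ} (hu : u ∈ f.eval x) (hv : v ∈ g.eval x) :
    Nat.pair u v ∈ (Code.pair f g).eval x :=
  Part.mem_bind (Part.mem_map _ hu) (Part.mem_map _ hv)

theorem mem_eval_rfind'_of_zero {f : Code} {a m : ℕ} (h : 0 ∈ f.eval (Nat.pair a m)) :
    m ∈ (Code.rfind' f).eval (Nat.pair a m) := by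
  obtain ⟨k, hk⟩ := Code.evaln_complete.1 h
  have hb := Code.evaln_bound hk
  obtain ⟨k, rfl⟩ := Nat.exists_eq_add_one_of_ne_zero (Nat.ne_zero_of_lt hb)
  refine Code.evaln_complete.2 ⟨k + 1, ?_⟩
  rw [Option.mem_def] at hk
  simp [Code.evaln, Nat.unpaired, hk, Nat.lt_succ_iff.1 hb]

theorem mem_eval_rfind'_of_succ {f : Code} {a m v y : ℕ} (h : v + 1 ∈ f.eval (Nat.pair a m))
    (hy : y ∈ (Code.rfind' f).eval (Nat.pair a (m + 1))) :
    y ∈ (Code.rfind' f).eval (Nat.pair a m) := by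
  obtain ⟨k, hk⟩ := Code.evaln_complete.1 h
  obtain ⟨l, hl⟩ := Code.evaln_complete.1 hy
  have hb := Code.evaln_bound hk
  replace hk := Code.evaln_mono (le_max_left k l |>.trans (Nat.le_succ _)) hk
  replace hl := Code.evaln_mono (le_max_right k l) hl
  rw [Option.mem_def] at hk hl
  exact Code.evaln_complete.2 ⟨max k l + 1, by simp [Code.evaln, Nat.unpaired, hk, hl, hb.le]⟩

variable {rel : Symbol → Q → Q → Prop} {e : ℕ} {num : Q → ℕ}

theorem PairSucc.pair_eq (hzero : ∀ {x}, rel .zero x x → num x = 0)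
    (hsucc : ∀ {x y}, rel .succ x y → num y = num x + 1)
    (hlt : ∀ {x y}, rel .lt x y → num x < num y) {a' b' a b : Q} (h : PairSucc rel a' b' a b) :
    Nat.pair (num a) (num b) = Nat.pair (num a') (num b') + 1 := by
  rw [pair_eq_pair_add_one_iff]
  rcases h with ⟨rfl, ha, hb⟩ | ⟨hba, rfl, hb⟩ | ⟨hab, rfl, hb⟩ | ⟨ha, hab, rfl⟩
  · exact .inl ⟨rfl, hzero ha, hsucc hb⟩
  · exact .inr (.inl ⟨hlt hba, rfl, hsucc hb⟩)
  · exact .inr (.inr (.inl ⟨hsucc hab, rfl, hzero hb⟩))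
  · exact .inr (.inr (.inr ⟨hsucc ha, hlt hab, rfl⟩))

namespace IsComputation

theorem wellFounded_lt [Finite Q] (h : IsComputation rel e) : WellFounded (rel .lt) :=
  have : IsTrans Q (rel .lt) := ⟨h.lt_trans⟩
  have : Std.Irrefl (rel .lt) := ⟨h.lt_irrefl⟩
  Finite.wellFounded_of_trans_of_irrefl _

theorem exists_height [Finite Q] (h : IsComputation rel e) :
    ∃ num : Q → ℕ, (∀ {x}, rel .zero x x → num x = 0) ∧
      (∀ {x y}, rel .succ x y → num y = num x + 1) := by
  classical
  let num : Q → ℕ := h.wellFounded_lt.fix fun y ih =>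
    if hy : ∃ x, rel .succ x y then ih hy.choose (h.succ_lt _ _ hy.choose_spec) + 1 else 0
  have num_eq (y) : num y = if hy : ∃ x, rel .succ x y then num hy.choose + 1 else 0 :=
    h.wellFounded_lt.fix_eq _ y
  refine ⟨num, fun {x} hx => ?_, fun {x y} hxy => ?_⟩
  · rw [num_eq, dif_neg fun ⟨y, hy⟩ => h.zero_not_succ x y hx hy]
  · have hy : ∃ x, rel .succ x y := ⟨x, hxy⟩
    rw [num_eq y, dif_pos hy, h.succ_inj _ _ _ hy.choose_spec hxy]

theorem exists_isValuation [Finite Q] (h : IsComputation rel e) :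
    ∃ num : Q → ℕ, IsValuation rel num := by
  obtain ⟨num, hzero, hsucc⟩ := h.exists_height
  have hlt {x y} (hxy : rel .lt x y) : num x < num y := by
    induction y using h.wellFounded_lt.induction with
    | _ y ih =>
      obtain hxy | ⟨z, hzy, hxz⟩ := h.lt_step x y hxy
      · grind
      · grind [ih z (h.succ_lt _ _ hzy) hxz]
  refine ⟨num, hzero, hsucc, fun {a b c} hc => ?_⟩
  induction c using h.wellFounded_lt.induction generalizing a b with
  | _ c ih =>
    obtain ⟨ha, hb, hc⟩ | ⟨c', a', b', hcc', hc', hstep⟩ := h.pair_step a b c hc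
    · rw [hzero ha, hzero hb, hzero hc]; rfl
    · rw [hsucc hcc', ih c' (h.succ_lt _ _ hcc') hc', hstep.pair_eq hzero hsucc hlt]

theorem isSound_prec (h : IsComputation rel e) (hnum : IsValuation rel num) {f g : Code}
    (hfg : Encodable.encode (Code.prec f g) ≤ e) (hf : IsSound rel num f)
    (hg : IsSound rel num g) : IsSound rel num (.prec f g) := by
  intro x y hxy
  induction hn : (num x).unpair.2 generalizing x y with
  | zero =>
    obtain ⟨a, m, hx, ⟨-, hay⟩ | ⟨m', x', i, t, s, hm, -⟩⟩ := h.justified _ hfg _ _ hxy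
    · rw [hnum.pair hx, Nat.unpair_pair] at hn
      rw [hnum.pair hx, show num m = 0 from hn, Code.eval_prec_zero]
      exact hf _ _ hay
    · simp [hnum.pair hx, hnum.succ hm] at hn
  | succ n ih =>
    obtain ⟨a, m, hx, ⟨hm, -⟩ | ⟨m', x', i, t, s, hm, hx', hi, ht, hs, hy⟩⟩ :=
      h.justified _ hfg _ _ hxy
    · simp [hnum.pair hx, hnum.zero hm] at hn
    · rw [hnum.pair hx, hnum.succ hm, Nat.unpair_pair] at hn
      rw [hnum.pair hx, hnum.succ hm, Code.eval_prec_succ]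
      refine Part.mem_bind (a := num i) ?_ ?_
      · rw [← hnum.pair hx']
        exact ih _ _ hi (by simpa [hnum.pair hx'] using hn)
      · rw [← hnum.pair ht, ← hnum.pair hs]
        exact hg _ _ hy

theorem isSound_rfind' [Finite Q] (h : IsComputation rel e) (hnum : IsValuation rel num)
    {f : Code} (hfe : Encodable.encode (Code.rfind' f) ≤ e) (hf : IsSound rel num f) :
    IsSound rel num (.rfind' f) := by
  obtain ⟨B, hB⟩ := (Set.finite_range num).bddAbove
  rw [mem_upperBounds, Set.forall_mem_range] at hB
  intro x y hxy
  induction hk : B - (num x).unpair.2 using Nat.strong_induction_on generalizing x y with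
  | _ k ih =>
    obtain ⟨a, m, v, hx, hv, hcase⟩ := h.justified _ hfe _ _ hxy
    have hv := hf _ _ hv
    rw [hnum.pair hx] at hv ⊢
    obtain ⟨hzero, rfl⟩ | ⟨v', m', x', hv', hm', hx', hy⟩ := hcase
    · rw [hnum.zero hzero] at hv
      exact mem_eval_rfind'_of_zero hv
    · have hdecr : B - (num x').unpair.2 < k := by
        have := hB m'
        simp only [hnum.pair hx, hnum.pair hx', hnum.succ hm', Nat.unpair_pair] at *
        omega
      have hy := ih _ hdecr _ _ hy rfl
      rw [hnum.pair hx', hnum.succ hm'] at hy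
      rw [hnum.succ hv'] at hv
      exact mem_eval_rfind'_of_succ hv hy

theorem isSound [Finite Q] (h : IsComputation rel e) (hnum : IsValuation rel num) (c : Code)
    (hc : Encodable.encode c ≤ e) : IsSound rel num c := by
  induction c with
  | zero =>
    exact fun x y hxy => by
      simp [Code.eval, hnum.zero (h.justified _ hc _ _ hxy), pure, PFun.pure]
  | succ => exact fun x y hxy => by simp [Code.eval, hnum.succ (h.justified _ hc _ _ hxy)]
  | left =>
    intro x y hxy
    obtain ⟨z, hx⟩ := h.justified _ hc _ _ hxy
    simp [Code.eval, hnum.pair hx]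
  | right =>
    intro x y hxy
    obtain ⟨z, hx⟩ := h.justified _ hc _ _ hxy
    simp [Code.eval, hnum.pair hx]
  | pair f g hf hg =>
    obtain ⟨hfc, hgc⟩ := Code.encode_lt_pair f g
    intro x y hxy
    obtain ⟨u, v, hu, hv, hy⟩ := h.justified _ hc _ _ hxy
    rw [hnum.pair hy]
    exact mem_eval_pair (hf (hfc.le.trans hc) _ _ hu) (hg (hgc.le.trans hc) _ _ hv)
  | comp f g hf hg =>
    obtain ⟨hfc, hgc⟩ := Code.encode_lt_comp f g
    intro x y hxy
    obtain ⟨u, hu, hy⟩ := h.justified _ hc _ _ hxy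
    exact Part.mem_bind (hg (hgc.le.trans hc) _ _ hu) (hf (hfc.le.trans hc) _ _ hy)
  | prec f g hf hg =>
    obtain ⟨hfc, hgc⟩ := Code.encode_lt_prec f g
    exact h.isSound_prec hnum hc (hf (hfc.le.trans hc)) (hg (hgc.le.trans hc))
  | rfind' f hf =>
    exact h.isSound_rfind' hnum hc (hf ((Code.encode_lt_rfind' f).le.trans hc))

theorem dom_eval [Finite Q] (h : IsComputation rel e) {c : Code} (hc : Encodable.encode c ≤ e)
    {n : ℕ} {t : ℕ → Q} (hzero : rel .zero (t 0) (t 0))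
    (hsucc : ∀ i < n, rel .succ (t i) (t (i + 1))) {y : Q} (hy : rel (.eval c) (t n) y) :
    (c.eval n).Dom := by
  obtain ⟨num, hnum⟩ := h.exists_isValuation
  have num_t : ∀ i ≤ n, num (t i) = i := by
    intro i hi
    induction i with
    | zero => exact hnum.zero hzero
    | succ i ih => rw [hnum.succ (hsucc i hi), ih (by omega)]
  have := h.isSound hnum c hc _ _ hy
  rw [num_t n le_rfl] at this
  exact Part.dom_iff_mem.2 ⟨_, this⟩

end IsComputation

section Standard

theorem mem_evaln_pair {K x y : ℕ} {f g : Code} (h : y ∈ Code.evaln K (.pair f g) x) :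
    ∃ u ∈ Code.evaln K f x, ∃ v ∈ Code.evaln K g x, y = Nat.pair u v := by
  cases K with
  | zero => simp [Code.evaln] at h
  | succ K =>
    obtain ⟨-, u, hu, v, hv, hy⟩ := by
      simpa [Code.evaln, Option.bind_eq_some_iff, Seq.seq] using h
    exact ⟨u, hu, v, hv, hy.symm⟩

theorem mem_evaln_comp {K x y : ℕ} {f g : Code} (h : y ∈ Code.evaln K (.comp f g) x) :
    ∃ u ∈ Code.evaln K g x, y ∈ Code.evaln K f u := by
  cases K with
  | zero => simp [Code.evaln] at h
  | succ K =>
    obtain ⟨-, u, hu, hy⟩ := by simpa [Code.evaln, Option.bind_eq_some_iff] using h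
    exact ⟨u, hu, hy⟩

theorem mem_evaln_prec_zero {K a y : ℕ} {f g : Code}
    (h : y ∈ Code.evaln K (.prec f g) (Nat.pair a 0)) : y ∈ Code.evaln K f a := by
  cases K with
  | zero => simp [Code.evaln] at h
  | succ K =>
    obtain ⟨-, hy⟩ := by simpa [Code.evaln, Option.bind_eq_some_iff] using h
    exact hy

theorem mem_evaln_prec_succ {K a m y : ℕ} {f g : Code}
    (h : y ∈ Code.evaln K (.prec f g) (Nat.pair a (m + 1))) :
    ∃ p ∈ Code.evaln K (.prec f g) (Nat.pair a m),
      y ∈ Code.evaln K g (Nat.pair a (Nat.pair m p)) := by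
  cases K with
  | zero => simp [Code.evaln] at h
  | succ K =>
    obtain ⟨-, p, hp, hy⟩ := by simpa [Code.evaln, Option.bind_eq_some_iff] using h
    exact ⟨p, Code.evaln_mono K.le_succ hp, hy⟩

theorem mem_evaln_rfind' {K a m y : ℕ} {f : Code}
    (h : y ∈ Code.evaln K (.rfind' f) (Nat.pair a m)) :
    ∃ v ∈ Code.evaln K f (Nat.pair a m),
      (v = 0 ∧ y = m) ∨ ∃ w, v = w + 1 ∧ y ∈ Code.evaln K (.rfind' f) (Nat.pair a (m + 1)) := by
  cases K with
  | zero => simp [Code.evaln] at h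
  | succ K =>
    obtain ⟨-, v, hv, hy⟩ := by simpa [Code.evaln, Option.bind_eq_some_iff] using h
    refine ⟨v, hv, ?_⟩
    cases v with
    | zero => exact .inl ⟨rfl, by simpa using hy.symm⟩
    | succ w => exact .inr ⟨w, rfl, Code.evaln_mono K.le_succ (by simpa using hy)⟩

/-- The intended meaning of the relation symbols on numbers: `K` steps of evaluation are allowed, of
the codes numbered up to `e` only. -/
def StandardRel (K e : ℕ) : Symbol → ℕ → ℕ → Prop
  | .same, i, j => i = j
  | .fst, i, j => j = i.unpair.1
  | .snd, i, j => j = i.unpair.2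
  | .zero, i, j => i = 0 ∧ j = 0
  | .succ, i, j => j = i + 1
  | .lt, i, j => i < j
  | .eval c, i, j => Encodable.encode c ≤ e ∧ j ∈ Code.evaln K c i

/-- The restriction of the standard relations to the numbers up to `N`. -/
def FinRel (K e N : ℕ) (s : Symbol) (i j : Fin (N + 1)) : Prop := StandardRel K e s i j

theorem exists_output_bound (K e : ℕ) :
    ∃ N, ∀ c i j, StandardRel K e (.eval c) i j → j ≤ N := by
  refine ⟨(Finset.range (e + 1)).sup fun d => (Finset.range K).sup fun i =>
    (Code.evaln K (Denumerable.ofNat Code d) i).getD 0, fun c i j ⟨hc, hj⟩ => ?_⟩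
  refine le_trans ?_ (Finset.le_sup (Finset.mem_range.2 (Nat.lt_succ_of_le hc)))
  refine le_trans ?_ (Finset.le_sup (Finset.mem_range.2 (Code.evaln_bound hj)))
  rw [Denumerable.ofNat_encode, Option.mem_def.1 hj, Option.getD_some]

namespace FinRel

variable {K e N : ℕ}

theorem splits_iff {a b c : Fin (N + 1)} :
    Splits (FinRel K e N) a b c ↔ (c : ℕ) = Nat.pair a b := by
  refine ⟨fun ⟨ha, hb⟩ => ?_, fun h => ⟨?_, ?_⟩⟩
  · rw [show (a : ℕ) = _ from ha, show (b : ℕ) = _ from hb, Nat.pair_unpair]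
  all_goals simp [FinRel, StandardRel, h]

theorem pairStep {a b c : Fin (N + 1)} (h : Splits (FinRel K e N) a b c) :
    PairStep (FinRel K e N) a b c := by
  rw [splits_iff] at h
  have ha := Nat.left_le_pair a b
  have hb := Nat.right_le_pair a b
  obtain ⟨_ | k, hk⟩ := c
  · have ha0 : (a : ℕ) = 0 := Nat.le_zero.1 (ha.trans h.symm.le)
    have hb0 : (b : ℕ) = 0 := Nat.le_zero.1 (hb.trans h.symm.le)
    exact .inl ⟨⟨ha0, ha0⟩, ⟨hb0, hb0⟩, rfl, rfl⟩
  · have ha' := Nat.unpair_left_le k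
    have hb' := Nat.unpair_right_le k
    refine .inr ⟨⟨k, by omega⟩, ⟨k.unpair.1, by omega⟩, ⟨k.unpair.2, by omega⟩, rfl,
      splits_iff.2 (Nat.pair_unpair k).symm, ?_⟩
    have hpair : Nat.pair a b = Nat.pair k.unpair.1 k.unpair.2 + 1 := by
      rw [Nat.pair_unpair]; exact h.symm
    obtain ⟨h₁, ha, h₂⟩ | ⟨h₁, h₂, h₃⟩ | ⟨h₁, h₂, hb⟩ | ⟨h₁, h₂, h₃⟩ :=
      pair_eq_pair_add_one_iff.1 hpair
    · exact .inl ⟨Fin.ext h₁, ⟨ha, ha⟩, h₂⟩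
    · exact .inr (.inl ⟨h₁, Fin.ext h₂, h₃⟩)
    · exact .inr (.inr (.inl ⟨h₁, Fin.ext h₂, hb, hb⟩))
    · exact .inr (.inr (.inr ⟨h₁, h₂, Fin.ext h₃⟩))

theorem justified_prec {f g : Code} {i j : Fin (N + 1)} (hKN : K ≤ N)
    (h : FinRel K e N (.eval (.prec f g)) i j) :
    Justified (FinRel K e N) (.prec f g) i j := by
  obtain ⟨he, h⟩ := h
  obtain ⟨hf, hg⟩ := Code.encode_lt_prec f g
  obtain ⟨a, m, hi⟩ : ∃ a m, (i : ℕ) = Nat.pair a m := ⟨_, _, (Nat.pair_unpair i).symm⟩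
  have := Nat.left_le_pair a m
  have := Nat.right_le_pair a m
  rw [hi] at h
  refine ⟨⟨a, by omega⟩, ⟨m, by omega⟩, splits_iff.2 hi, ?_⟩
  cases m with
  | zero => exact .inl ⟨⟨rfl, rfl⟩, by omega, mem_evaln_prec_zero h⟩
  | succ m =>
    obtain ⟨p, hp, hj⟩ := mem_evaln_prec_succ h
    have := Code.evaln_bound hp
    have := Code.evaln_bound hj
    have := Nat.right_le_pair a (Nat.pair m p)
    have := Nat.right_le_pair m p
    exact .inr ⟨⟨m, by omega⟩, ⟨Nat.pair a m, by omega⟩, ⟨p, by omega⟩,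
      ⟨Nat.pair m p, by omega⟩, ⟨Nat.pair a (Nat.pair m p), by omega⟩, rfl, splits_iff.2 rfl,
      ⟨he, hp⟩, splits_iff.2 rfl, splits_iff.2 rfl, by omega, hj⟩

theorem justified_rfind' {f : Code} {i j : Fin (N + 1)} (hKN : K ≤ N)
    (hN : ∀ c i j, StandardRel K e (.eval c) i j → j ≤ N)
    (h : FinRel K e N (.eval (.rfind' f)) i j) :
    Justified (FinRel K e N) (.rfind' f) i j := by
  obtain ⟨he, h⟩ := h
  have hf := (Code.encode_lt_rfind' f).le.trans he
  obtain ⟨a, m, hi⟩ : ∃ a m, (i : ℕ) = Nat.pair a m := ⟨_, _, (Nat.pair_unpair i).symm⟩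
  have := Nat.left_le_pair a m
  have := Nat.right_le_pair a m
  rw [hi] at h
  obtain ⟨v, hv, hcase⟩ := mem_evaln_rfind' h
  have hvN := hN f _ v ⟨hf, hv⟩
  refine ⟨⟨a, by omega⟩, ⟨m, by omega⟩, ⟨v, by omega⟩, splits_iff.2 hi,
    ⟨hf, by rw [hi]; exact hv⟩, ?_⟩
  obtain ⟨rfl, hj⟩ | ⟨v, rfl, hj⟩ := hcase
  · exact .inl ⟨⟨rfl, rfl⟩, Fin.ext hj⟩
  · have := Code.evaln_bound hj
    have := Nat.right_le_pair a (m + 1)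
    exact .inr ⟨⟨v, by omega⟩, ⟨m + 1, by omega⟩, ⟨Nat.pair a (m + 1), by omega⟩, rfl, rfl,
      splits_iff.2 rfl, he, hj⟩

theorem justified {c : Code} {i j : Fin (N + 1)} (hKN : K ≤ N)
    (hN : ∀ c i j, StandardRel K e (.eval c) i j → j ≤ N)
    (hij : FinRel K e N (.eval c) i j) : Justified (FinRel K e N) c i j := by
  obtain ⟨hc, h⟩ := hij
  have hj := Code.evaln_sound h
  have := Nat.unpair_left_le i
  have := Nat.unpair_right_le i
  cases c with
  | zero =>
    have hj : (j : ℕ) = 0 := by simpa [Code.eval, pure, PFun.pure] using hj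
    exact ⟨hj, hj⟩
  | succ => exact show (j : ℕ) = i + 1 by simpa [Code.eval] using hj
  | left =>
    have hj : (j : ℕ) = (i : ℕ).unpair.1 := by simpa [Code.eval] using hj
    exact ⟨⟨(i : ℕ).unpair.2, by omega⟩, hj, rfl⟩
  | right =>
    have hj : (j : ℕ) = (i : ℕ).unpair.2 := by simpa [Code.eval] using hj
    exact ⟨⟨(i : ℕ).unpair.1, by omega⟩, rfl, hj⟩
  | pair f g =>
    obtain ⟨hf, hg⟩ := Code.encode_lt_pair f g
    obtain ⟨u, hu, v, hv, hj⟩ := mem_evaln_pair h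
    have := Nat.left_le_pair u v
    have := Nat.right_le_pair u v
    exact ⟨⟨u, by omega⟩, ⟨v, by omega⟩, ⟨by omega, hu⟩, ⟨by omega, hv⟩, splits_iff.2 hj⟩
  | comp f g =>
    obtain ⟨hf, hg⟩ := Code.encode_lt_comp f g
    obtain ⟨u, hu, hj⟩ := mem_evaln_comp h
    have huN := hN g i u ⟨by omega, hu⟩
    exact ⟨⟨u, by omega⟩, ⟨by omega, hu⟩, by omega, hj⟩
  | prec f g => exact justified_prec hKN ⟨hc, h⟩
  | rfind' f => exact justified_rfind' hKN hN ⟨hc, h⟩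

theorem isComputation (hKN : K ≤ N) (hN : ∀ c i j, StandardRel K e (.eval c) i j → j ≤ N) :
    IsComputation (FinRel K e N) e where
  lt_irrefl x := Nat.lt_irrefl x
  lt_trans _ _ _ := Nat.lt_trans
  succ_lt _ _ h := Nat.lt_of_succ_le (Nat.le_of_eq (Eq.symm h))
  succ_inj _ _ _ h h' := Fin.ext (Nat.succ_injective (h.symm.trans h'))
  zero_not_succ _ _ h h' := Nat.succ_ne_zero _ (h'.symm.trans h.1)
  lt_step x y h := by
    have h : (x : ℕ) < y := h
    by_cases hxy : (y : ℕ) = x + 1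
    · exact .inl hxy
    · exact .inr ⟨⟨y - 1, by omega⟩, show (y : ℕ) = y - 1 + 1 by omega,
        show (x : ℕ) < y - 1 by omega⟩
  pair_step _ _ _ := pairStep
  justified _ _ _ _ := justified hKN hN

end FinRel

section Map

variable {P Q : Type*} {rel : Symbol → P → P → Prop} {f : P → Q}

theorem PairStep.map {rel' : Symbol → Q → Q → Prop}
    (hf : ∀ s x y, rel s x y → rel' s (f x) (f y)) {a b c : P} (h : PairStep rel a b c) :
    PairStep rel' (f a) (f b) (f c) := by
  obtain ⟨ha, hb, hc⟩ | ⟨c', a', b', hcc', hc', h⟩ := h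
  · exact .inl ⟨hf _ _ _ ha, hf _ _ _ hb, hf _ _ _ hc⟩
  · refine .inr ⟨f c', f a', f b', hf _ _ _ hcc', ⟨hf _ _ _ hc'.1, hf _ _ _ hc'.2⟩, ?_⟩
    exact h.imp (And.imp (congrArg f) (And.imp (hf _ _ _) (hf _ _ _))) <|
      Or.imp (And.imp (hf _ _ _) (And.imp (congrArg f) (hf _ _ _))) <|
      Or.imp (And.imp (hf _ _ _) (And.imp (congrArg f) (hf _ _ _)))
        (And.imp (hf _ _ _) (And.imp (hf _ _ _) (congrArg f)))

theorem Justified.map {rel' : Symbol → Q → Q → Prop}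
    (hf : ∀ s x y, rel s x y → rel' s (f x) (f y)) {c : Code} {x y : P}
    (h : Justified rel c x y) : Justified rel' c (f x) (f y) := by
  have splits {a b c : P} (h : Splits rel a b c) : Splits rel' (f a) (f b) (f c) :=
    ⟨hf _ _ _ h.1, hf _ _ _ h.2⟩
  cases c with
  | zero => exact hf _ _ _ h
  | succ => exact hf _ _ _ h
  | left => exact h.imp' f fun _ => splits
  | right => exact h.imp' f fun _ => splits
  | pair =>
    obtain ⟨u, v, hu, hv, hy⟩ := h
    exact ⟨f u, f v, hf _ _ _ hu, hf _ _ _ hv, splits hy⟩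
  | comp =>
    obtain ⟨u, hu, hy⟩ := h
    exact ⟨f u, hf _ _ _ hu, hf _ _ _ hy⟩
  | prec =>
    obtain ⟨a, m, hx, h⟩ := h
    refine ⟨f a, f m, splits hx, h.imp (And.imp (hf _ _ _) (hf _ _ _)) ?_⟩
    rintro ⟨m', x', i, t, s, hm, hx', hi, ht, hs, hy⟩
    exact ⟨f m', f x', f i, f t, f s, hf _ _ _ hm, splits hx', hf _ _ _ hi, splits ht,
      splits hs, hf _ _ _ hy⟩
  | rfind' =>
    obtain ⟨a, m, v, hx, hv, h⟩ := h
    refine ⟨f a, f m, f v, splits hx, hf _ _ _ hv, h.imp (And.imp (hf _ _ _) (congrArg f)) ?_⟩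
    rintro ⟨v', m', x', hv', hm', hx', hy⟩
    exact ⟨f v', f m', f x', hf _ _ _ hv', hf _ _ _ hm', splits hx', hf _ _ _ hy⟩

theorem IsComputation.map {e : ℕ} (h : IsComputation rel e) (hf : Function.Injective f) :
    IsComputation (fun s => Relation.Map (rel s) f f) e := by
  have hom (s : Symbol) (x y : P) (hxy : rel s x y) : Relation.Map (rel s) f f (f x) (f y) :=
    ⟨x, y, hxy, rfl, rfl⟩
  refine ⟨?_, ?_, ?_, ?_, ?_, ?_, ?_, ?_⟩
  · rintro - ⟨x, y, hxy, rfl, hyx⟩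
    exact h.lt_irrefl x (hf hyx ▸ hxy)
  · rintro - - - ⟨x, y, hxy, rfl, rfl⟩ ⟨y', z, hyz, hy, rfl⟩
    exact hom _ _ _ (h.lt_trans _ _ _ hxy (hf hy ▸ hyz))
  · rintro - - ⟨x, y, hxy, rfl, rfl⟩
    exact hom _ _ _ (h.succ_lt _ _ hxy)
  · rintro - - - ⟨x, y, hxy, rfl, rfl⟩ ⟨x', y', hxy', rfl, hy⟩
    exact congrArg f (h.succ_inj _ _ _ hxy (hf hy ▸ hxy'))
  · rintro - - ⟨x, x', hx, rfl, hx'⟩ ⟨y, x'', hy, rfl, hx''⟩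
    exact h.zero_not_succ _ _ (hf hx' ▸ hx) (hf hx'' ▸ hy)
  · rintro - - ⟨x, y, hxy, rfl, rfl⟩
    obtain hxy | ⟨z, hzy, hxz⟩ := h.lt_step _ _ hxy
    · exact .inl (hom _ _ _ hxy)
    · exact .inr ⟨f z, hom _ _ _ hzy, hom _ _ _ hxz⟩
  · rintro - - - ⟨⟨c, a, ha, rfl, rfl⟩, c', b, hb, hc, rfl⟩
    exact (h.pair_step a b c ⟨ha, hf hc ▸ hb⟩).map hom
  · rintro c hc - - ⟨x, y, hxy, rfl, rfl⟩
    exact (h.justified c hc x y hxy).map hom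

end Map

end Standard

end Computation

/-! ### Coding relations in a poset -/

section Coding

variable {Q : Type*} [PartialOrder Q] {r : ℕ}

/-- `x` has color `c` when it lies above exactly the first `c` of the constants `g`. -/
def Colored (g : Fin r → Q) (c : ℕ) (x : Q) : Prop := ∀ j : Fin r, g j ≤ x ↔ (j : ℕ) < c

/-- Some element lies below a source `x` (color `0`), a target `y` (color `1`) and a label of
number `k` (color `2 + k`). -/
def IsFact (g : Fin r → Q) (k : ℕ) (x y : Q) : Prop :=
  ∃ f l, f < x ∧ f < y ∧ f < l ∧ Colored g (2 + k) l ∧ Colored g 0 x ∧ Colored g 1 y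

/-- The relations on sources coded by the facts. A fact relates a source to a target, and a target
is identified with the source to which it is related by `same`. -/
def FactRel (g : Fin r → Q) (s : Symbol) (x y : Q) : Prop :=
  ∃ y', IsFact g s.idx x y' ∧ IsFact g Symbol.same.idx y y'

/-- Conditions on the constants `g` that force them into their intended positions in the model: a
constant lies below four elements, hence is not a fact, and the elements `x` force the constants
to be listed in the right order. -/
def Anchored (g x : Fin r → Q) (z : Fin 4 → Q) : Prop :=
  (∀ j t, g j < z t) ∧ Function.Injective z ∧ (∀ j, g j < x j) ∧ ∀ j j', j < j' → ¬ g j' < x j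

variable (Q) in
/-- All anchored constants code a computation of the codes numbered up to `e`. The colors of the
sources, the targets and the labels are `0, …, 8 + e`; as there are `9 + e` constants, none of them
is the color of an element that lies above all the constants. -/
def CodesComputation (e : ℕ) : Prop :=
  ∀ (g x : Fin (9 + e) → Q) (z : Fin 4 → Q), Anchored g x z → IsComputation (FactRel g) e

variable (Q) in
/-- Some anchored constants code a chain of `n` successors that starts at zero and whose last
element has a value under the code `c`. -/
def HasHaltingChain (e : ℕ) (c : Code) (n : ℕ) : Prop :=
  ∃ (g x : Fin (9 + e) → Q) (z : Fin 4 → Q), Anchored g x z ∧ ∃ t : ℕ → Q,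
    FactRel g .zero (t 0) (t 0) ∧ (∀ i < n, FactRel g .succ (t i) (t (i + 1))) ∧
      ∃ y, FactRel g (.eval c) (t n) y

theorem CodesComputation.dom_eval [Finite Q] {e n : ℕ} {c : Code} (h : CodesComputation Q e)
    (hc : Encodable.encode c ≤ e) (hchain : HasHaltingChain Q e c n) : (c.eval n).Dom := by
  obtain ⟨g, x, z, hg, t, hzero, hsucc, y, hy⟩ := hchain
  exact (h g x z hg).dom_eval hc hzero hsucc hy

end Coding

/-! ### The model -/

/-- The bipartite poset with minimal elements `B` and maximal elements `A`, ordered by `R`. -/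
inductive IncidencePoset {A B : Type} (R : B → A → Prop) : Type u
  | bot (b : B)
  | top (a : A)

namespace IncidencePoset

variable {A B : Type} {R : B → A → Prop}

/-- The strict order of the incidence poset. -/
inductive Below : IncidencePoset.{u} R → IncidencePoset.{u} R → Prop
  | intro {b a} (h : R b a) : Below (bot b) (top a)

instance : PartialOrder (IncidencePoset.{u} R) where
  le x y := x = y ∨ Below x y
  le_refl _ := .inl rfl
  le_trans
    | _, _, _, .inl rfl, h => h
    | _, _, _, h, .inl rfl => h
    | _, _, _, .inr ⟨_⟩, .inr h => nomatch h
  le_antisymm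
    | _, _, .inl rfl, _ => rfl
    | _, _, _, .inl h => h.symm
    | _, _, .inr ⟨_⟩, .inr h => nomatch h

theorem lt_iff_below {x y : IncidencePoset.{u} R} : x < y ↔ Below x y := by
  rw [lt_iff_le_and_ne]
  refine ⟨fun ⟨h, hne⟩ => h.resolve_left hne, fun h => ⟨.inr h, ?_⟩⟩
  obtain ⟨-⟩ := h
  exact nofun

@[simp]
theorem bot_lt_top {b : B} {a : A} : (bot b : IncidencePoset.{u} R) < top a ↔ R b a :=
  lt_iff_below.trans ⟨fun ⟨h⟩ => h, .intro⟩

theorem bot_le_top {b : B} {a : A} : (bot b : IncidencePoset.{u} R) ≤ top a ↔ R b a :=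
  ⟨fun h => bot_lt_top.1 (h.lt_of_ne nofun), fun h => (bot_lt_top.2 h).le⟩

theorem exists_of_lt {x y : IncidencePoset.{u} R} (h : x < y) :
    ∃ b a, x = bot b ∧ y = top a ∧ R b a := by
  obtain ⟨hR⟩ := lt_iff_below.1 h
  exact ⟨_, _, rfl, rfl, hR⟩

theorem bot_lt_iff {b : B} {y : IncidencePoset.{u} R} : bot b < y ↔ ∃ a, y = top a ∧ R b a :=
  lt_iff_below.trans ⟨fun ⟨h⟩ => ⟨_, rfl, h⟩, fun ⟨_, hy, h⟩ => hy ▸ .intro h⟩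

theorem isMax_top {a : A} : IsMax (top a : IncidencePoset.{u} R) := by
  rw [isMax_iff_forall_not_lt]
  intro y hy
  obtain ⟨b, a, h, -⟩ := exists_of_lt hy
  cases h

theorem isMin_bot {b : B} : IsMin (bot b : IncidencePoset.{u} R) := by
  rw [isMin_iff_forall_not_lt]
  intro y hy
  obtain ⟨b, a, -, h, -⟩ := exists_of_lt hy
  cases h

theorem not_isMax_bot {b : B} {a : A} (h : R b a) : ¬ IsMax (bot b : IncidencePoset.{u} R) :=
  (bot_lt_top.2 h).not_isMax

instance [Finite A] [Finite B] : Finite (IncidencePoset.{u} R) :=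
  Finite.of_surjective (Sum.elim bot top) fun
    | bot b => ⟨.inl b, rfl⟩
    | top a => ⟨.inr a, rfl⟩

theorem isNiceBipartitePoset (hA : ∃ a₁ a₂ a₃ : A, a₁ ≠ a₂ ∧ a₁ ≠ a₃ ∧ a₂ ≠ a₃)
    (hB : ∃ b₁ b₂ b₃ : B, b₁ ≠ b₂ ∧ b₁ ≠ b₃ ∧ b₂ ≠ b₃)
    (top_nontrivial : ∀ a, (∃ b b', b ≠ b' ∧ R b a ∧ R b' a) ∧ ∃ b, ¬ R b a)
    (bot_nontrivial : ∀ b, (∃ a a', a ≠ a' ∧ R b a ∧ R b a') ∧ ∃ a, ¬ R b a) :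
    IsNiceBipartitePoset (IncidencePoset.{u} R) := by
  have not_isMax (b : B) : ¬ IsMax (bot b : IncidencePoset.{u} R) := by
    obtain ⟨⟨a, -, -, h, -⟩, -⟩ := bot_nontrivial b
    exact not_isMax_bot h
  obtain ⟨a₁, a₂, a₃, h₁₂, h₁₃, h₂₃⟩ := hA
  obtain ⟨b₁, b₂, b₃, k₁₂, k₁₃, k₂₃⟩ := hB
  refine ⟨?_, ⟨top a₁, top a₂, top a₃, isMax_top, isMax_top, isMax_top, by simpa, by simpa,
    by simpa⟩, ⟨bot b₁, bot b₂, bot b₃, not_isMax _, not_isMax _, not_isMax _, by simpa, by simpa,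
    by simpa⟩, ?_, ?_⟩
  · rintro (b | a)
    exacts [.inr isMin_bot, .inl isMax_top]
  · rintro (b | a) h
    · exact (not_isMax b h).elim
    · obtain ⟨⟨b, b', hne, hb, hb'⟩, c, hc⟩ := top_nontrivial a
      exact ⟨⟨bot b, bot b', not_isMax _, not_isMax _, by simpa, bot_lt_top.2 hb,
        bot_lt_top.2 hb'⟩, bot c, not_isMax _, by rwa [bot_le_top]⟩
  · rintro (b | a) h
    · obtain ⟨⟨a, a', hne, ha, ha'⟩, c, hc⟩ := bot_nontrivial b
      exact ⟨⟨top a, top a', isMax_top, isMax_top, by simpa, bot_lt_top.2 ha,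
        bot_lt_top.2 ha'⟩, top c, isMax_top, by rwa [bot_le_top]⟩
    · exact (h isMax_top).elim

end IncidencePoset

theorem StandardRel.idx_lt {K e i j : ℕ} {s : Symbol} (h : StandardRel K e s i j) :
    2 + s.idx < 9 + e := by
  cases s with
  | eval c => exact (show 2 + (6 + Encodable.encode c) < 9 + e by have := h.1; omega)
  | _ => simp only [Symbol.idx]; omega

/-- The minimal elements of the model: the intended constants, and a fact for every instance of a
standard relation. -/
inductive Minimal (K e N : ℕ) : Type
  | anchor (j : Fin (9 + e))
  | fact (s : Symbol) (i j : Fin (N + 1)) (h : FinRel K e N s i j)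

/-- The order of the model. A maximal element is a number with a color; a fact lies below its
source, of color `0`, its target, of color `1`, and its label. -/
def Incident {K e N : ℕ} : Minimal K e N → Fin (9 + e + 1) × Fin (N + 1) → Prop
  | .anchor j, (c, _) => (j : ℕ) < c
  | .fact s i j _, (c, k) =>
    ((c : ℕ) = 0 ∧ k = i) ∨ ((c : ℕ) = 1 ∧ k = j) ∨ ((c : ℕ) = 2 + s.idx ∧ k = 0)

/-- The finite poset that codes the standard relations on the numbers up to `N`. -/
abbrev Model (K e N : ℕ) : Type u := IncidencePoset.{u} (Incident (K := K) (e := e) (N := N))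

instance {K e N : ℕ} : Finite (Minimal K e N) := by
  let data : Minimal K e N → Fin (9 + e) ⊕ (Fin (9 + e) × Fin (N + 1) × Fin (N + 1)) := fun
    | .anchor j => .inl j
    | .fact s i j h => .inr (⟨2 + s.idx, h.idx_lt⟩, i, j)
  refine Finite.of_injective data ?_
  rintro (j | ⟨s, i, j, h⟩) (j' | ⟨s', i', j', h'⟩) heq
  · rw [Sum.inl_injective heq]
  · cases heq
  · cases heq
  · simp only [data, Sum.inr.injEq, Prod.mk.injEq, Fin.mk.injEq, Nat.add_left_cancel_iff] at heq
    obtain ⟨hs, rfl, rfl⟩ := heq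
    obtain rfl := Symbol.idx_injective hs
    rfl

namespace Model

open IncidencePoset

variable {K e N : ℕ}

/-- The intended values of the constants. -/
def anchor (j : Fin (9 + e)) : Model.{u} K e N := bot (.anchor j)

/-- The intended source that represents a number. -/
def source (i : Fin (N + 1)) : Model.{u} K e N := top (0, i)

theorem source_injective : Function.Injective (source : Fin (N + 1) → Model.{u} K e N) :=
  fun _ _ h => by simpa [source] using h

theorem anchor_lt_top {j : Fin (9 + e)} {c : Fin (9 + e + 1)} {k : Fin (N + 1)} :
    (anchor j : Model.{u} K e N) < top (c, k) ↔ (j : ℕ) < c := bot_lt_top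

theorem two_minimal_below (c : Fin (9 + e + 1)) (k : Fin (N + 1)) :
    ∃ b b' : Minimal K e N, b ≠ b' ∧ Incident b (c, k) ∧ Incident b' (c, k) := by
  have same : FinRel K e N .same k k := rfl
  have fst : FinRel K e N .fst k ⟨(k : ℕ).unpair.1, (Nat.unpair_left_le _).trans_lt k.2⟩ := rfl
  obtain hc | hc | hc : (c : ℕ) = 0 ∨ (c : ℕ) = 1 ∨ 1 < (c : ℕ) := by omega
  · exact ⟨.fact _ _ _ same, .fact _ _ _ fst, by simp, .inl ⟨hc, rfl⟩, .inl ⟨hc, rfl⟩⟩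
  · exact ⟨.fact _ _ _ same, .anchor 0, by simp, .inr (.inl ⟨hc, rfl⟩), by simp [Incident, hc]⟩
  · exact ⟨.anchor ⟨0, by omega⟩, .anchor ⟨1, by omega⟩, by simp, Nat.zero_lt_of_lt hc, hc⟩

theorem exists_minimal_not_below (c : Fin (9 + e + 1)) (k : Fin (N + 1)) :
    ∃ b : Minimal K e N, ¬ Incident b (c, k) := by
  by_cases hc : (c : ℕ) = 9 + e
  · refine ⟨.fact .same 0 0 rfl, ?_⟩
    simp only [Incident, Symbol.idx]
    omega
  · exact ⟨.anchor ⟨8 + e, by omega⟩, by simp only [Incident]; omega⟩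

theorem isNiceBipartitePoset (hN : 3 ≤ N) : IsNiceBipartitePoset (Model.{u} K e N) := by
  refine IncidencePoset.isNiceBipartitePoset
    ⟨(0, ⟨0, by omega⟩), (0, ⟨1, by omega⟩), (0, ⟨2, by omega⟩), by simp, by simp, by simp⟩
    ⟨.anchor ⟨0, by omega⟩, .anchor ⟨1, by omega⟩, .anchor ⟨2, by omega⟩, by simp, by simp, by simp⟩
    (fun (c, k) => ⟨two_minimal_below c k, exists_minimal_not_below c k⟩) ?_
  rintro (j | ⟨s, i, j, h⟩)
  · exact ⟨⟨(Fin.last _, 0), (Fin.last _, ⟨1, by omega⟩), by simp [Fin.ext_iff], j.2, j.2⟩,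
      (0, 0), Nat.not_lt_zero _⟩
  · have := h.idx_lt
    exact ⟨⟨(0, i), (⟨1, by omega⟩, j), by simp [Fin.ext_iff], .inl ⟨rfl, rfl⟩,
      .inr (.inl ⟨rfl, rfl⟩)⟩, (Fin.last _, 0), by simp only [Incident, Fin.val_last]; omega⟩

theorem exists_eq_anchor {b : Model.{u} K e N} {z : Fin 4 → Model.{u} K e N}
    (hbz : ∀ t, b < z t) (hz : Function.Injective z) : ∃ j, b = anchor j := by
  obtain ⟨b, -, rfl, -, -⟩ := exists_of_lt (hbz 0)
  obtain j | ⟨s, i, j, h⟩ := b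
  · exact ⟨j, rfl⟩
  have hs := h.idx_lt
  have hz₃ (t : Fin 4) :
      ∃ m, z t = top (![(0, i), (⟨1, by omega⟩, j), (⟨2 + s.idx, by omega⟩, 0)] m) := by
    obtain ⟨⟨c, k⟩, ht, ⟨hc, rfl⟩ | ⟨hc, rfl⟩ | ⟨hc, rfl⟩⟩ := bot_lt_iff.1 (hbz t)
    exacts [⟨0, by simp [ht, Fin.ext_iff, hc]⟩, ⟨1, by simp [ht, Fin.ext_iff, hc]⟩,
      ⟨2, by simp [ht, Fin.ext_iff, hc]⟩]
  choose m hm using hz₃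
  obtain ⟨t, t', htt, hmm⟩ := Fintype.exists_ne_map_eq_of_card_lt m (by simp)
  exact (htt (hz (by rw [hm, hm, hmm]))).elim

theorem eq_anchor {g x : Fin (9 + e) → Model.{u} K e N} {z : Fin 4 → Model.{u} K e N}
    (h : Anchored g x z) : g = anchor := by
  obtain ⟨hz, hinj, hx, hx'⟩ := h
  choose γ hγ using fun j => exists_eq_anchor (hz j) hinj
  have hmono : StrictMono γ := by
    intro j j' hjj
    obtain ⟨-, ⟨c, i⟩, -, hc, -⟩ := exists_of_lt (hx j)
    have hj := hx j
    have hj' := hx' j j' hjj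
    rw [hγ, hc, anchor_lt_top] at hj hj'
    exact Fin.lt_def.2 (by omega)
  funext j
  rw [hγ, le_antisymm hmono.apply_le hmono.le_apply]

theorem anchored (hN : 3 ≤ N) : Anchored (anchor : Fin (9 + e) → Model.{u} K e N)
    (fun j => top (j.succ, 0)) (fun t => top (Fin.last _, t.castLE (by omega))) := by
  refine ⟨fun j t => anchor_lt_top.2 j.2, fun s t hst => ?_,
    fun j => anchor_lt_top.2 (Nat.lt_succ_self _), fun j j' hjj => ?_⟩
  · simpa using hst
  · rw [anchor_lt_top, Fin.val_succ]
    omega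

theorem colored_top {k : ℕ} {c : Fin (9 + e + 1)} {i : Fin (N + 1)} :
    Colored (anchor : Fin (9 + e) → Model.{u} K e N) k (top (c, i)) ↔ (c : ℕ) = min k (9 + e) := by
  have anchor_le {j : Fin (9 + e)} : (anchor j : Model.{u} K e N) ≤ top (c, i) ↔ (j : ℕ) < c :=
    bot_le_top
  simp only [Colored, anchor_le]
  constructor
  · intro h
    rcases lt_trichotomy (c : ℕ) (min k (9 + e)) with hlt | heq | hlt
    · exact absurd ((h ⟨c, by omega⟩).2 (hlt.trans_le (min_le_left _ _))) (lt_irrefl _)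
    · exact heq
    · have hk : k < 9 + e := by omega
      exact absurd ((h ⟨k, hk⟩).1 (by simpa [hk.le] using hlt)) (lt_irrefl _)
  · intro h j
    omega

theorem isFact_anchor {s : Symbol} {x y : Model.{u} K e N} : IsFact anchor s.idx x y ↔
    ∃ i j, FinRel K e N s i j ∧ x = source i ∧ y = top (⟨1, by omega⟩, j) := by
  constructor
  · rintro ⟨f, l, hfx, hfy, hfl, hl, hx, hy⟩
    obtain ⟨b, ⟨c₀, i⟩, rfl, rfl, h₀⟩ := exists_of_lt hfx
    obtain ⟨⟨c₁, j⟩, rfl, h₁⟩ := bot_lt_iff.1 hfy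
    obtain ⟨⟨c₂, k⟩, rfl, h₂⟩ := bot_lt_iff.1 hfl
    rw [colored_top] at hl hx hy
    obtain a | ⟨t, i', j', h⟩ := b
    · simp [Incident, hx] at h₀
    have ht := h.idx_lt
    simp only [Incident] at h₀ h₁ h₂
    obtain rfl : i = i' := by omega
    obtain rfl : j = j' := by omega
    obtain rfl : t = s := Symbol.idx_injective (by omega)
    exact ⟨i, j, h, by simp [source, Fin.ext_iff, hx], by simp [Fin.ext_iff]; omega⟩
  · rintro ⟨i, j, h, rfl, rfl⟩
    have hs := h.idx_lt
    exact ⟨bot (.fact s i j h), top (⟨2 + s.idx, by omega⟩, 0), bot_lt_top.2 (.inl ⟨rfl, rfl⟩),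
      bot_lt_top.2 (.inr (.inl ⟨rfl, rfl⟩)), bot_lt_top.2 (.inr (.inr ⟨rfl, rfl⟩)),
      colored_top.2 (by simp; omega), colored_top.2 (by simp), colored_top.2 (by simp; omega)⟩

theorem factRel_anchor : FactRel (anchor : Fin (9 + e) → Model.{u} K e N) =
    fun s => Relation.Map (FinRel K e N s) source source := by
  ext s x y
  simp only [FactRel, isFact_anchor, Relation.Map]
  constructor
  · rintro ⟨-, ⟨i, j, h, rfl, rfl⟩, k, l, hkl, rfl, hjl⟩
    obtain rfl : k = j := by
      simp only [top.injEq, Prod.mk.injEq, true_and] at hjl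
      exact Fin.ext (hkl.trans (congrArg Fin.val hjl.symm))
    exact ⟨i, k, h, rfl, rfl⟩
  · rintro ⟨i, j, h, rfl, rfl⟩
    exact ⟨_, ⟨i, j, h, rfl, rfl⟩, j, j, rfl, rfl, rfl⟩

theorem codesComputation (hKN : K ≤ N) (hN : ∀ c i j, StandardRel K e (.eval c) i j → j ≤ N) :
    CodesComputation (Model.{u} K e N) e := by
  intro g x z h
  rw [eq_anchor h, factRel_anchor]
  exact (FinRel.isComputation hKN hN).map source_injective

theorem hasHaltingChain {n y : ℕ} {c : Code} (hN : 3 ≤ N) (hn : n ≤ N) (hyN : y ≤ N)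
    (hy : StandardRel K e (.eval c) n y) : HasHaltingChain (Model.{u} K e N) e c n := by
  refine ⟨anchor, _, _, anchored hN, fun i => source (Fin.ofNat _ i), ?_⟩
  have factRel {s : Symbol} {i j : ℕ} (hi : i ≤ N) (hj : j ≤ N) (h : StandardRel K e s i j) :
      FactRel (anchor : Fin (9 + e) → Model.{u} K e N) s (source (Fin.ofNat _ i))
        (source (Fin.ofNat _ j)) := by
    rw [factRel_anchor]
    refine ⟨_, _, ?_, rfl, rfl⟩
    simpa [FinRel, Nat.mod_eq_of_lt (Nat.lt_succ_of_le hi), Nat.mod_eq_of_lt (Nat.lt_succ_of_le hj)]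
      using h
  exact ⟨factRel N.zero_le N.zero_le ⟨rfl, rfl⟩,
    fun i hi => factRel (by omega) (by omega) rfl, _, factRel hn hyN hy⟩

end Model

theorem exists_nice_iff_dom {e n : ℕ} {c : Code} (hc : Encodable.encode c ≤ e) :
    (∃ (Q : Type u) (_ : PartialOrder Q), Finite Q ∧ IsNiceBipartitePoset Q ∧
      CodesComputation Q e ∧ HasHaltingChain Q e c n) ↔ (c.eval n).Dom := by
  constructor
  · rintro ⟨Q, _, _, -, hQ, hchain⟩
    exact hQ.dom_eval hc hchain
  · intro h
    obtain ⟨y, hy⟩ := Part.dom_iff_mem.1 h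
    obtain ⟨K, hK⟩ := Code.evaln_complete.1 hy
    obtain ⟨M, hM⟩ := exists_output_bound K e
    have hN (c i j) (h : StandardRel K e (.eval c) i j) : j ≤ M + K + 3 := by
      have := hM c i j h
      omega
    have hnK := Code.evaln_bound hK
    exact ⟨Model.{u} K e (M + K + 3), inferInstance, inferInstance,
      Model.isNiceBipartitePoset (by omega), Model.codesComputation (by omega) hN,
      Model.hasHaltingChain (by omega) (by omega) (hN _ _ _ ⟨hc, hK⟩) ⟨hc, hK⟩⟩

/-! ### Definability -/

/-- A property of tuples of elements of partial orders. -/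
abbrev TuplePred (α : Type) := ∀ (Q : Type u) [PartialOrder Q], (α → Q) → Prop

/-- `P` is definable by a quantifier-free formula. -/
def IsQF {α : Type} (P : TuplePred.{u} α) : Prop :=
  ∃ θ : Language.order.Formula α, BoundedFormula.IsQF θ ∧
    ∀ (Q : Type u) [PartialOrder Q] (v : α → Q), θ.Realize v ↔ P Q v

/-- `P` is definable by an existential formula. Posets are nonempty, so that unused quantified
variables do no harm. -/
def IsEx {α : Type} (P : TuplePred.{u} α) : Prop :=
  ∃ (β : Type) (_ : Finite β) (R : TuplePred.{u} (α ⊕ β)), IsQF R ∧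
    ∀ (Q : Type u) [PartialOrder Q] [Nonempty Q] (v : α → Q),
      P Q v ↔ ∃ w : β → Q, R Q (Sum.elim v w)

/-- `P` is definable by a universal-existential formula in nonempty posets. -/
def IsAE {α : Type} (P : TuplePred.{u} α) : Prop :=
  ∃ (β : Type) (_ : Finite β) (R : TuplePred.{u} (α ⊕ β)), IsEx R ∧
    ∀ (Q : Type u) [PartialOrder Q] [Nonempty Q] (v : α → Q),
      P Q v ↔ ∀ w : β → Q, R Q (Sum.elim v w)

/-- The properties `P n` are definable in nonempty posets by existential formulas that assert the
existence of a chain of `n + 1` blocks of elements, with the same quantifier-free conditions on the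
first block, on consecutive blocks and on the last block for all `n`. -/
def IsExChain {α : Type} (P : ℕ → TuplePred.{u} α) : Prop :=
  ∃ (κ : Type) (_ : Finite κ) (B : TuplePred.{u} (α ⊕ κ)) (S : TuplePred.{u} (κ ⊕ κ))
    (T : TuplePred.{u} κ), IsQF B ∧ IsQF S ∧ IsQF T ∧
      ∀ (n : ℕ) (Q : Type u) [PartialOrder Q] [Nonempty Q] (v : α → Q),
        P n Q v ↔ ∃ c : ℕ → κ → Q, B Q (Sum.elim v (c 0)) ∧
          (∀ i < n, S Q (Sum.elim (c i) (c (i + 1)))) ∧ T Q (c n)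

theorem exists_sum_elim {α β Q : Type*} {p : (α ⊕ β → Q) → Prop} :
    (∃ w, p w) ↔ ∃ u v, p (Sum.elim u v) :=
  ⟨fun ⟨w, h⟩ => ⟨w ∘ .inl, w ∘ .inr, by rwa [Sum.elim_comp_inl_inr]⟩, fun ⟨_, _, h⟩ => ⟨_, h⟩⟩

theorem forall_sum_elim {α β Q : Type*} {p : (α ⊕ β → Q) → Prop} :
    (∀ w, p w) ↔ ∀ u v, p (Sum.elim u v) :=
  ⟨fun h _ _ => h _, fun h w => Sum.elim_comp_inl_inr w ▸ h _ _⟩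

theorem sum_elim_comp_sumAssoc {α β γ Q : Type*} (u : α → Q) (v : β → Q) (w : γ → Q) :
    Sum.elim u (Sum.elim v w) ∘ Equiv.sumAssoc α β γ = Sum.elim (Sum.elim u v) w := by
  ext ((i | i) | i) <;> rfl

section Closure

variable {α β κ : Type} {P P' : TuplePred.{u} α}

namespace IsQF

theorem false : IsQF.{u} (α := α) fun _ _ _ => False :=
  ⟨⊥, .falsum, fun _ _ _ => Iff.rfl⟩

theorem le (a b : α) : IsQF.{u} fun _ _ v => v a ≤ v b :=
  ⟨Term.le (n := 0) (.var (.inl a)) (.var (.inl b)), (BoundedFormula.IsAtomic.rel _ _).isQF,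
    fun _ _ _ => Iff.rfl⟩

theorem imp (h : IsQF P) (h' : IsQF P') : IsQF fun Q _ v => P Q v → P' Q v := by
  obtain ⟨θ, hθ, hP⟩ := h
  obtain ⟨θ', hθ', hP'⟩ := h'
  exact ⟨θ.imp θ', hθ.imp hθ', fun Q _ v => imp_congr (hP Q v) (hP' Q v)⟩

theorem not (h : IsQF P) : IsQF fun Q _ v => ¬ P Q v := h.imp false

theorem and (h : IsQF P) (h' : IsQF P') : IsQF fun Q _ v => P Q v ∧ P' Q v := by
  simpa using (h.imp h'.not).not

theorem or (h : IsQF P) (h' : IsQF P') : IsQF fun Q _ v => P Q v ∨ P' Q v := by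
  simpa only [or_iff_not_imp_left] using h.not.imp h'

theorem iff (h : IsQF P) (h' : IsQF P') : IsQF fun Q _ v => (P Q v ↔ P' Q v) := by
  simpa only [iff_iff_implies_and_implies] using (h.imp h').and (h'.imp h)

theorem const (p : Prop) : IsQF.{u} (α := α) fun _ _ _ => p := by
  by_cases hp : p
  · simpa [hp] using false.not
  · simpa [hp] using false

theorem lt (a b : α) : IsQF.{u} fun _ _ v => v a < v b := by
  simpa only [lt_iff_le_not_ge] using (le a b).and (le b a).not

theorem eq (a b : α) : IsQF.{u} fun _ _ v => v a = v b := by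
  simpa only [le_antisymm_iff] using (le a b).and (le b a)

theorem reindex (h : IsQF P) (f : α → β) : IsQF fun Q _ v => P Q (v ∘ f) := by
  obtain ⟨θ, hθ, hP⟩ := h
  exact ⟨θ.relabel f, hθ.relabel _, fun Q _ v => Formula.realize_relabel.trans (hP Q _)⟩

theorem forall_finite [Finite κ] {P : κ → TuplePred.{u} α} (h : ∀ k, IsQF (P k)) :
    IsQF fun Q _ v => ∀ k, P k Q v := by
  induction κ using Finite.induction_empty_option with
  | of_equiv e ih => simpa only [e.surjective.forall] using ih fun k => h (e k)
  | h_empty => simpa using const True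
  | h_option ih => simpa only [Option.forall] using (h none).and (ih fun k => h (some k))

theorem isEx (h : IsQF P) : IsEx P :=
  ⟨Empty, inferInstance, _, h.reindex Sum.inl, fun _ _ _ _ => by simp⟩

end IsQF

namespace IsEx

theorem reindex (h : IsEx P) (f : α → β) : IsEx fun Q _ v => P Q (v ∘ f) := by
  obtain ⟨γ, hγ, R, hR, hP⟩ := h
  refine ⟨γ, hγ, _, hR.reindex (Sum.map f id), fun Q _ _ v => ?_⟩
  simp only [hP, Sum.elim_comp_map, Function.comp_id]

theorem and (h : IsEx P) (h' : IsEx P') : IsEx fun Q _ v => P Q v ∧ P' Q v := by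
  obtain ⟨β, hβ, R, hR, hP⟩ := h
  obtain ⟨β', hβ', R', hR', hP'⟩ := h'
  refine ⟨β ⊕ β', inferInstance, _, (hR.reindex (Sum.map id Sum.inl)).and
    (hR'.reindex (Sum.map id Sum.inr)), fun Q _ _ v => ?_⟩
  simp [hP, hP', exists_sum_elim, Sum.elim_comp_map]

theorem or (h : IsEx P) (h' : IsEx P') : IsEx fun Q _ v => P Q v ∨ P' Q v := by
  obtain ⟨β, hβ, R, hR, hP⟩ := h
  obtain ⟨β', hβ', R', hR', hP'⟩ := h'
  refine ⟨β ⊕ β', inferInstance, _, (hR.reindex (Sum.map id Sum.inl)).or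
    (hR'.reindex (Sum.map id Sum.inr)), fun Q _ _ v => ?_⟩
  simp [hP, hP', exists_sum_elim, Sum.elim_comp_map, exists_or]

theorem exists_tuple [Finite κ]
    {P : ∀ (Q : Type u) [PartialOrder Q], (α → Q) → (κ → Q) → Prop}
    (h : IsEx (α := α ⊕ κ) fun Q _ v => P Q (v ∘ Sum.inl) (v ∘ Sum.inr)) :
    IsEx fun Q _ v => ∃ x : κ → Q, P Q v x := by
  obtain ⟨β, hβ, R, hR, hP⟩ := h
  refine ⟨κ ⊕ β, inferInstance, _, hR.reindex (Equiv.sumAssoc α κ β), fun Q _ _ v => ?_⟩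
  simp only [exists_sum_elim, sum_elim_comp_sumAssoc, ← hP, Sum.elim_comp_inl, Sum.elim_comp_inr]

theorem isAE (h : IsEx P) : IsAE P :=
  ⟨Empty, inferInstance, _, h.reindex Sum.inl, fun _ _ _ _ => by simp⟩

end IsEx

theorem IsEx.exists {P : ∀ (Q : Type u) [PartialOrder Q], (α → Q) → Q → Prop}
    (h : IsEx (α := α ⊕ Unit) fun Q _ v => P Q (v ∘ Sum.inl) (v (.inr ()))) :
    IsEx fun Q _ v => ∃ x : Q, P Q v x := by
  simpa only [(Equiv.funUnique Unit _).exists_congr_left, Equiv.funUnique_symm_apply,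
    uniqueElim_const] using
    exists_tuple (P := fun Q _ v (x : Unit → Q) => P Q v (x ())) h

namespace IsAE

theorem and (h : IsAE P) (h' : IsAE P') : IsAE fun Q _ v => P Q v ∧ P' Q v := by
  obtain ⟨β, hβ, R, hR, hP⟩ := h
  obtain ⟨β', hβ', R', hR', hP'⟩ := h'
  refine ⟨β ⊕ β', inferInstance, _, (hR.reindex (Sum.map id Sum.inl)).and
    (hR'.reindex (Sum.map id Sum.inr)), fun Q _ _ v => ?_⟩
  simp [hP, hP', forall_sum_elim, Sum.elim_comp_map, forall_and]

theorem forall_finite [Finite κ] {P : κ → TuplePred.{u} α} (h : ∀ k, IsAE (P k)) :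
    IsAE fun Q _ v => ∀ k, P k Q v := by
  induction κ using Finite.induction_empty_option with
  | of_equiv e ih => simpa only [e.surjective.forall] using ih fun k => h (e k)
  | h_empty => simpa using (IsQF.const True).isEx.isAE
  | h_option ih => simpa only [Option.forall] using (h none).and (ih fun k => h (some k))

theorem forall_tuple [Finite κ]
    {P : ∀ (Q : Type u) [PartialOrder Q], (α → Q) → (κ → Q) → Prop}
    (h : IsAE (α := α ⊕ κ) fun Q _ v => P Q (v ∘ Sum.inl) (v ∘ Sum.inr)) :
    IsAE fun Q _ v => ∀ x : κ → Q, P Q v x := by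
  obtain ⟨β, hβ, R, hR, hP⟩ := h
  refine ⟨κ ⊕ β, inferInstance, _, hR.reindex (Equiv.sumAssoc α κ β), fun Q _ _ v => ?_⟩
  simp only [forall_sum_elim, sum_elim_comp_sumAssoc, ← hP, Sum.elim_comp_inl, Sum.elim_comp_inr]

theorem imp (h : IsEx P) (h' : IsAE P') : IsAE fun Q _ v => P Q v → P' Q v := by
  obtain ⟨β, hβ, R, hR, hP⟩ := h
  obtain ⟨β', hβ', R', hR', hP'⟩ := h'
  refine ⟨β ⊕ β', inferInstance, fun Q _ v => R Q (v ∘ Sum.map id Sum.inl) →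
    R' Q (v ∘ Sum.map id Sum.inr), ?_, fun Q _ _ v => ?_⟩
  · simpa only [imp_iff_not_or] using (hR.reindex _).not.isEx.or (hR'.reindex _)
  · simp only [hP, hP', forall_sum_elim, Sum.elim_comp_map, Function.comp_id, Sum.elim_comp_inl,
      Sum.elim_comp_inr]
    exact ⟨fun h u w hu => h ⟨u, hu⟩ w, fun h ⟨u, hu⟩ w => h u w hu⟩

end IsAE

theorem IsAE.forall {P : ∀ (Q : Type u) [PartialOrder Q], (α → Q) → Q → Prop}
    (h : IsAE (α := α ⊕ Unit) fun Q _ v => P Q (v ∘ Sum.inl) (v (.inr ()))) :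
    IsAE fun Q _ v => ∀ x : Q, P Q v x := by
  simpa only [(Equiv.funUnique Unit _).forall_congr_left, Equiv.funUnique_symm_apply,
    uniqueElim_const] using
    forall_tuple (P := fun Q _ v (x : Unit → Q) => P Q v (x ())) h

namespace IsExChain

/-- The witnesses of the existential conditions are stored in the blocks. -/
theorem of_isEx [Finite κ] {P : ℕ → TuplePred.{u} α} {B : TuplePred.{u} (α ⊕ κ)}
    {S : TuplePred.{u} (κ ⊕ κ)} {T : TuplePred.{u} κ} (hB : IsEx B) (hS : IsEx S) (hT : IsEx T)
    (hP : ∀ (n : ℕ) (Q : Type u) [PartialOrder Q] [Nonempty Q] (v : α → Q),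
      P n Q v ↔ ∃ c : ℕ → κ → Q, B Q (Sum.elim v (c 0)) ∧
        (∀ i < n, S Q (Sum.elim (c i) (c (i + 1)))) ∧ T Q (c n)) : IsExChain P := by
  obtain ⟨β, hβ, B', hB', hB⟩ := hB
  obtain ⟨σ, hσ, S', hS', hS⟩ := hS
  obtain ⟨τ, hτ, T', hT', hT⟩ := hT
  refine ⟨κ ⊕ β ⊕ σ ⊕ τ, inferInstance, _, _, _,
    hB'.reindex (Sum.elim (Sum.map id .inl) (.inr ∘ .inr ∘ .inl)),
    hS'.reindex (Sum.elim (Sum.map .inl .inl) (.inl ∘ .inr ∘ .inr ∘ .inl)),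
    hT'.reindex (Sum.elim .inl (.inr ∘ .inr ∘ .inr)), fun n Q _ _ v => ?_⟩
  simp only [hP, hB, hS, hT, Sum.comp_elim, Sum.elim_comp_map, Function.comp_id,
    ← Function.comp_assoc, Sum.elim_comp_inl, Sum.elim_comp_inr]
  constructor
  · rintro ⟨c, ⟨b, hb⟩, hs, w, hw⟩
    choose! s hs using hs
    exact ⟨fun i => Sum.elim (c i) (Sum.elim b (Sum.elim (s i) w)), hb, hs, hw⟩
  · rintro ⟨d, hb, hs, hw⟩
    exact ⟨fun i => d i ∘ .inl, ⟨_, hb⟩, fun i hi => ⟨_, hs i hi⟩, _, hw⟩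

/-- The parameters `p` are copied into every block. -/
theorem exists_parameters {δ : Type} [Finite δ] [Finite κ] {P : ℕ → TuplePred.{u} α}
    {B : TuplePred.{u} (α ⊕ δ ⊕ κ)} {S : TuplePred.{u} (δ ⊕ κ ⊕ κ)} {T : TuplePred.{u} (δ ⊕ κ)}
    (hB : IsEx B) (hS : IsEx S) (hT : IsEx T)
    (hP : ∀ (n : ℕ) (Q : Type u) [PartialOrder Q] [Nonempty Q] (v : α → Q),
      P n Q v ↔ ∃ (p : δ → Q) (t : ℕ → κ → Q), B Q (Sum.elim v (Sum.elim p (t 0))) ∧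
        (∀ i < n, S Q (Sum.elim p (Sum.elim (t i) (t (i + 1))))) ∧ T Q (Sum.elim p (t n))) :
    IsExChain P := by
  refine of_isEx (κ := δ ⊕ κ) (S := fun Q _ v => (∀ k, v (.inr (.inl k)) = v (.inl (.inl k))) ∧
      S Q (v ∘ Sum.elim (.inl ∘ .inl) (Sum.map .inr .inr))) hB
    ((IsQF.forall_finite fun _ => .eq _ _).isEx.and (hS.reindex _)) hT fun n Q _ _ v => ?_
  rw [hP]
  constructor
  · rintro ⟨p, t, hb, hs, ht⟩
    exact ⟨fun i => Sum.elim p (t i), hb, fun i hi => ⟨fun _ => rfl, by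
      simpa only [Sum.comp_elim, Sum.elim_comp_map, ← Function.comp_assoc, Sum.elim_comp_inl,
        Sum.elim_comp_inr] using hs i hi⟩, ht⟩
  · rintro ⟨c, hb, hs, ht⟩
    have parameters_eq : ∀ i ≤ n, c i ∘ Sum.inl = c 0 ∘ Sum.inl := by
      intro i hi
      induction i with
      | zero => rfl
      | succ i ih => exact (funext (hs i hi).1).trans (ih (by omega))
    refine ⟨c 0 ∘ .inl, fun i => c i ∘ .inr, by rwa [Sum.elim_comp_inl_inr], fun i hi => ?_, ?_⟩
    · rw [← parameters_eq i hi.le]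
      simpa only [Sum.comp_elim, Sum.elim_comp_map, ← Function.comp_assoc, Sum.elim_comp_inl,
        Sum.elim_comp_inr] using (hs i hi).2
    · rwa [← parameters_eq n le_rfl, Sum.elim_comp_inl_inr]

theorem reindex {P : ℕ → TuplePred.{u} α} (h : IsExChain P) (f : α → β) :
    IsExChain fun n Q _ v => P n Q (v ∘ f) := by
  obtain ⟨κ, hκ, B, S, T, hB, hS, hT, hP⟩ := h
  refine ⟨κ, hκ, _, S, T, hB.reindex (Sum.map f id), hS, hT, fun n Q _ _ v => ?_⟩
  simp only [hP, Sum.elim_comp_map, Function.comp_id]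

theorem isEx_and {E : TuplePred.{u} α} {P : ℕ → TuplePred.{u} α} (h : IsEx E)
    (h' : IsExChain P) : IsExChain fun n Q _ v => E Q v ∧ P n Q v := by
  obtain ⟨κ, hκ, B, S, T, hB, hS, hT, hP⟩ := h'
  refine of_isEx ((h.reindex Sum.inl).and hB.isEx) hS.isEx hT.isEx fun n Q _ _ v => ?_
  simp only [hP, Sum.elim_comp_inl, and_assoc, exists_and_left]

end IsExChain

end Closure

section CodingDefinability

variable {α : Type} {r : ℕ}

theorem IsQF.colored (g : Fin r → α) (c : ℕ) (a : α) :
    IsQF.{u} fun _ _ v => Colored (fun j => v (g j)) c (v a) :=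
  .forall_finite fun _ => .iff (.le _ _) (.const _)

theorem IsQF.anchored (g x : Fin r → α) (z : Fin 4 → α) :
    IsQF.{u} fun _ _ v => Anchored (fun j => v (g j)) (fun j => v (x j)) fun s => v (z s) :=
  .and (.forall_finite fun _ => .forall_finite fun _ => .lt _ _) <|
    .and (.forall_finite fun _ => .forall_finite fun _ => .imp (.eq _ _) (.const _)) <|
    .and (.forall_finite fun _ => .lt _ _) <|
      .forall_finite fun _ => .forall_finite fun _ => .imp (.const _) (.not (.lt _ _))

theorem IsEx.isFact (g : Fin r → α) (k : ℕ) (a b : α) :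
    IsEx.{u} fun _ _ v => IsFact (fun j => v (g j)) k (v a) (v b) :=
  .exists <| .exists <| IsQF.isEx <| .and (.lt _ _) <| .and (.lt _ _) <| .and (.lt _ _) <|
    .and (.colored _ _ _) <| .and (.colored _ _ _) (.colored _ _ _)

theorem IsEx.factRel (g : Fin r → α) (s : Symbol) (a b : α) :
    IsEx.{u} fun _ _ v => FactRel (fun j => v (g j)) s (v a) (v b) :=
  .exists <| .and (.isFact _ _ _ _) (.isFact _ _ _ _)

theorem IsEx.splits (g : Fin r → α) (a b c : α) :
    IsEx.{u} fun _ _ v => Splits (FactRel fun j => v (g j)) (v a) (v b) (v c) :=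
  .and (.factRel _ _ _ _) (.factRel _ _ _ _)

theorem IsEx.eq (a b : α) : IsEx.{u} fun _ _ v => v a = v b := (IsQF.eq a b).isEx

theorem IsEx.pairSucc (g : Fin r → α) (a' b' a b : α) :
    IsEx.{u} fun _ _ v => PairSucc (FactRel fun j => v (g j)) (v a') (v b') (v a) (v b) :=
  .or (.and (.eq _ _) <| .and (.factRel _ _ _ _) (.factRel _ _ _ _)) <|
    .or (.and (.factRel _ _ _ _) <| .and (.eq _ _) (.factRel _ _ _ _)) <|
    .or (.and (.factRel _ _ _ _) <| .and (.eq _ _) (.factRel _ _ _ _)) <|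
      .and (.factRel _ _ _ _) <| .and (.factRel _ _ _ _) (.eq _ _)

theorem IsEx.pairStep (g : Fin r → α) (a b c : α) :
    IsEx.{u} fun _ _ v => PairStep (FactRel fun j => v (g j)) (v a) (v b) (v c) :=
  .or (.and (.factRel _ _ _ _) <| .and (.factRel _ _ _ _) (.factRel _ _ _ _)) <|
    .exists <| .exists <| .exists <| .and (.factRel _ _ _ _) <|
      .and (.splits _ _ _ _) (.pairSucc _ _ _ _ _)

theorem IsEx.justified (g : Fin r → α) (c : Code) (a b : α) :
    IsEx.{u} fun _ _ v => Justified (FactRel fun j => v (g j)) c (v a) (v b) := by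
  cases c with
  | zero => exact .factRel _ _ _ _
  | succ => exact .factRel _ _ _ _
  | left => exact .exists (.splits _ _ _ _)
  | right => exact .exists (.splits _ _ _ _)
  | pair =>
    exact .exists <| .exists <| .and (.factRel _ _ _ _) <|
      .and (.factRel _ _ _ _) (.splits _ _ _ _)
  | comp => exact .exists <| .and (.factRel _ _ _ _) (.factRel _ _ _ _)
  | prec =>
    exact .exists <| .exists <| .and (.splits _ _ _ _) <|
      .or (.and (.factRel _ _ _ _) (.factRel _ _ _ _)) <|
      .exists <| .exists <| .exists <| .exists <| .exists <| .and (.factRel _ _ _ _) <|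
        .and (.splits _ _ _ _) <| .and (.factRel _ _ _ _) <| .and (.splits _ _ _ _) <|
        .and (.splits _ _ _ _) (.factRel _ _ _ _)
  | rfind' =>
    exact .exists <| .exists <| .exists <| .and (.splits _ _ _ _) <| .and (.factRel _ _ _ _) <|
      .or (.and (.factRel _ _ _ _) (.eq _ _)) <|
      .exists <| .exists <| .exists <| .and (.factRel _ _ _ _) <| .and (.factRel _ _ _ _) <|
        .and (.splits _ _ _ _) (.factRel _ _ _ _)

theorem isComputation_iff {Q : Type*} {rel : Symbol → Q → Q → Prop} {e : ℕ} :
    IsComputation rel e ↔ (∀ x, rel .lt x x → False) ∧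
      (∀ x y z, rel .lt x y → rel .lt y z → rel .lt x z) ∧
      (∀ x y, rel .succ x y → rel .lt x y) ∧
      (∀ x x' y, rel .succ x y → rel .succ x' y → x = x') ∧
      (∀ x y, rel .zero x x → rel .succ y x → False) ∧
      (∀ x y, rel .lt x y → rel .succ x y ∨ ∃ z, rel .succ z y ∧ rel .lt x z) ∧
      (∀ a b c, Splits rel a b c → PairStep rel a b c) ∧
      ∀ k : Fin (e + 1), ∀ x y, rel (.eval (Denumerable.ofNat Code k)) x y →
        Justified rel (Denumerable.ofNat Code k) x y := by
  refine ⟨fun ⟨h₁, h₂, h₃, h₄, h₅, h₆, h₇, h₈⟩ => ⟨h₁, h₂, h₃, h₄, h₅, h₆, h₇, fun k =>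
    h₈ _ (by simpa using k.is_le)⟩, fun ⟨h₁, h₂, h₃, h₄, h₅, h₆, h₇, h₈⟩ => ⟨h₁, h₂, h₃, h₄, h₅,
    h₆, h₇, fun c hc => ?_⟩⟩
  simpa using h₈ ⟨Encodable.encode c, Nat.lt_succ_of_le hc⟩

theorem IsAE.isComputation (g : Fin r → α) (e : ℕ) :
    IsAE.{u} fun _ _ v => IsComputation (FactRel fun j => v (g j)) e := by
  simp only [isComputation_iff]
  refine .and ?_ <| .and ?_ <| .and ?_ <| .and ?_ <| .and ?_ <| .and ?_ <| .and ?_ ?_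
  · exact .forall <| .imp (.factRel _ _ _ _) IsQF.false.isEx.isAE
  · exact .forall <| .forall <| .forall <| .imp (.factRel _ _ _ _) <| .imp (.factRel _ _ _ _)
      (IsEx.factRel _ _ _ _).isAE
  · exact .forall <| .forall <| .imp (.factRel _ _ _ _) (IsEx.factRel _ _ _ _).isAE
  · exact .forall <| .forall <| .forall <| .imp (.factRel _ _ _ _) <| .imp (.factRel _ _ _ _)
      (IsEx.eq _ _).isAE
  · exact .forall <| .forall <| .imp (.factRel _ _ _ _) <| .imp (.factRel _ _ _ _)
      IsQF.false.isEx.isAE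
  · exact .forall <| .forall <| .imp (.factRel _ _ _ _) <| IsEx.isAE <| .or (.factRel _ _ _ _) <|
      .exists <| .and (.factRel _ _ _ _) (.factRel _ _ _ _)
  · exact .forall <| .forall <| .forall <| .imp (.splits _ _ _ _) (IsEx.pairStep _ _ _ _).isAE
  · exact .forall_finite fun _ => .forall <| .forall <| .imp (.factRel _ _ _ _)
      (IsEx.justified _ _ _ _).isAE

theorem isAE_codesComputation (e : ℕ) :
    IsAE.{u} (α := Empty) fun Q _ _ => CodesComputation Q e :=
  .forall_tuple <| .forall_tuple <| .forall_tuple <|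
    .imp (IsQF.anchored _ _ _).isEx (.isComputation _ _)

theorem isExChain_hasHaltingChain (e : ℕ) (c : Code) :
    IsExChain.{u} (α := Empty) fun n Q _ _ => HasHaltingChain Q e c n := by
  refine .exists_parameters (δ := Fin (9 + e) ⊕ Fin (9 + e) ⊕ Fin 4) (κ := Unit)
    (B := fun Q _ v => Anchored (fun j => v (.inr (.inl (.inl j))))
      (fun j => v (.inr (.inl (.inr (.inl j))))) (fun s => v (.inr (.inl (.inr (.inr s))))) ∧
      FactRel (fun j => v (.inr (.inl (.inl j)))) .zero (v (.inr (.inr ()))) (v (.inr (.inr ()))))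
    (S := fun Q _ v => FactRel (fun j => v (.inl (.inl j))) .succ (v (.inr (.inl ())))
      (v (.inr (.inr ()))))
    (T := fun Q _ v => ∃ y : Q, FactRel (fun j => v (.inl (.inl j))) (.eval c) (v (.inr ())) y)
    (.and (IsQF.anchored _ _ _).isEx (.factRel _ _ _ _)) (.factRel _ _ _ _)
    (.exists (.factRel _ _ _ _)) fun n Q _ _ v => ⟨?_, ?_⟩
  · rintro ⟨g, x, z, hg, t, hzero, hsucc, y, hy⟩
    exact ⟨Sum.elim g (Sum.elim x z), fun i _ => t i, ⟨hg, hzero⟩, hsucc, y, hy⟩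
  · rintro ⟨p, t, ⟨hg, hzero⟩, hsucc, y, hy⟩
    exact ⟨_, _, _, hg, fun i => t i (), hzero, hsucc, y, hy⟩

end CodingDefinability

/-! ### Sentences -/

section Sentences

/-- The formula `θ` with the variable `a` replaced by the bound variable of number `f a`. -/
def instantiate {α : Type*} (N : ℕ) [NeZero N] (f : α → ℕ) (θ : Language.order.Formula α) :
    Language.order.BoundedFormula Empty N :=
  BoundedFormula.relabel (fun a => Sum.inr (Fin.ofNat N (f a))) θ

theorem realize_instantiate {α Q : Type*} [PartialOrder Q] {N : ℕ} [NeZero N] {f : α → ℕ}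
    {θ : Language.order.Formula α} {v : Empty → Q} {xs : Fin N → Q} :
    (instantiate N f θ).Realize v xs ↔ θ.Realize fun a => xs (Fin.ofNat N (f a)) :=
  BoundedFormula.realize_relabel.trans <| iff_of_eq <|
    congrArg (BoundedFormula.Realize θ _) (Subsingleton.elim _ _)

theorem isQF_foldr_imp {N : ℕ} {l : List (Language.order.BoundedFormula Empty N)}
    (h : ∀ φ ∈ l, φ.IsQF) : (l.foldr .imp ⊥ : Language.order.BoundedFormula Empty N).IsQF := by
  induction l with
  | nil => exact .falsum
  | cons φ l ih =>
    rw [List.forall_mem_cons] at h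
    exact h.1.imp (ih h.2)

theorem realize_allsLast {Q : Type*} [PartialOrder Q] {k : ℕ} {v : Empty → Q} {xs : Fin k → Q}
    (l : ℕ) {ψ : Language.order.BoundedFormula Empty (k + l)} :
    (BoundedFormula.allsLast l ψ).Realize v xs ↔
      ∀ ys : Fin l → Q, ψ.Realize v (Fin.append xs ys) := by
  induction l with
  | zero =>
    rw [Unique.forall_iff, Fin.append_right_nil _ _ rfl]
    rfl
  | succ l ih =>
    simp only [BoundedFormula.allsLast, ih, BoundedFormula.realize_all, ← Fin.append_snoc]
    exact ⟨fun h ys => Fin.snoc_init_self ys ▸ h _ _, fun h ys y => h (Fin.snoc ys y)⟩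

/-- Quantifier-free formulas that say when a tuple of parameters and a chain of `m`-tuples are
related: conditions on the parameters and the first tuple, on consecutive tuples, and on the last
tuple. -/
structure ChainMatrix (k m : ℕ) where
  first : Language.order.Formula (Fin k ⊕ Fin m)
  step : Language.order.Formula (Fin m ⊕ Fin m)
  last : Language.order.Formula (Fin m)
  isQF_first : BoundedFormula.IsQF first
  isQF_step : BoundedFormula.IsQF step
  isQF_last : BoundedFormula.IsQF last

theorem IsExChain.exists_chainMatrix {k : ℕ} {P : ℕ → TuplePred.{u} (Fin k)} (h : IsExChain P) :
    ∃ (m : ℕ) (M : ChainMatrix k m), ∀ (n : ℕ) (Q : Type u) [PartialOrder Q] [Nonempty Q]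
      (u : Fin k → Q), P n Q u ↔ ∃ c : ℕ → Fin m → Q, M.first.Realize (Sum.elim u (c 0)) ∧
        (∀ i < n, M.step.Realize (Sum.elim (c i) (c (i + 1)))) ∧ M.last.Realize (c n) := by
  obtain ⟨κ, hκ, B, S, T, hB, hS, hT, hP⟩ := h
  obtain ⟨m, ⟨e⟩⟩ := Finite.exists_equiv_fin κ
  obtain ⟨θB, hθB, hB⟩ := hB.reindex (Sum.map id e)
  obtain ⟨θS, hθS, hS⟩ := hS.reindex (Sum.map e e)
  obtain ⟨θT, hθT, hT⟩ := hT.reindex e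
  refine ⟨m, ⟨θB, θS, θT, hθB, hθS, hθT⟩, fun n Q _ _ u => ?_⟩
  have hsurj : Function.Surjective fun (c : ℕ → Fin m → Q) i => c i ∘ e := fun c =>
    ⟨fun i => c i ∘ e.symm, by simp [Function.comp_assoc]⟩
  simp only [hP, hsurj.exists, hB, hS, hT, Sum.elim_comp_map, Function.comp_id]

section Matrix

variable {k m : ℕ}

/-- The number of the `q`-th entry of the `i`-th tuple of a chain, where the numbers less than `k`
are those of the parameters. -/
def chainVar (k m i : ℕ) (q : Fin m) : ℕ := k + (m * i + q)

/-- The number of universally quantified variables of `ChainMatrix.sentence`. One variable is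
added so that `Fin (k + tailLength m n)` is inhabited. -/
abbrev tailLength (m n : ℕ) : ℕ := m * (n + 1) + 1

theorem chainVar_lt {i n : ℕ} (h : i ≤ n) (q : Fin m) : chainVar k m i q < k + tailLength m n := by
  have := Nat.mul_le_mul_left m h
  simp only [chainVar, tailLength, mul_add]
  omega

theorem exists_numbering {Q : Type*} [Nonempty Q] (u : Fin k → Q) (c : ℕ → Fin m → Q) :
    ∃ x : ℕ → Q, (∀ j : Fin k, x j = u j) ∧ ∀ i q, x (chainVar k m i q) = c i q := by
  have hinj : Function.Injective
      (Sum.elim Fin.val fun p => chainVar k m p.1 p.2 : Fin k ⊕ ℕ × Fin m → ℕ) := by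
    refine Fin.val_injective.sumElim (fun ⟨i, q⟩ ⟨i', q'⟩ h => ?_) fun j p => ?_
    · have : NeZero m := ⟨q.pos.ne'⟩
      exact (Nat.divModEquiv m).symm.injective (by simpa [chainVar, mul_comm] using h)
    · exact (j.isLt.trans_le (Nat.le_add_right _ _)).ne
  obtain ⟨x, hx⟩ := hinj.surjective_comp_right (Sum.elim u fun p => c p.1 p.2)
  exact ⟨x, fun j => congrFun hx (.inl j), fun i q => congrFun hx (.inr (i, q))⟩

namespace ChainMatrix

/-- The conditions on a chain of `n + 1` tuples, as formulas in `N` bound variables. -/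
def conditions (M : ChainMatrix k m) (N : ℕ) [NeZero N] (n : ℕ) :
    List (Language.order.BoundedFormula Empty N) :=
  instantiate N (Sum.elim Fin.val (chainVar k m 0)) M.first ::
    instantiate N (chainVar k m n) M.last ::
      (List.range n).map fun i =>
        instantiate N (Sum.elim (chainVar k m i) (chainVar k m (i + 1))) M.step

/-- The sentence saying that there are parameters that do not start a chain of length `n`. -/
def sentence (M : ChainMatrix k m) (n : ℕ) : Language.order.Sentence :=
  (BoundedFormula.allsLast (tailLength m n)
    ((M.conditions (k + tailLength m n) n).foldr .imp ⊥)).exs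

theorem isEASentence_sentence (M : ChainMatrix k m) (n : ℕ) : IsEASentence (M.sentence n) := by
  refine ⟨k, tailLength m n, _, isQF_foldr_imp ?_, rfl⟩
  simp only [conditions, List.forall_mem_cons, List.forall_mem_map]
  exact ⟨M.isQF_first.relabel _, M.isQF_last.relabel _, fun _ _ => M.isQF_step.relabel _⟩

theorem realize_conditions {Q : Type*} [PartialOrder Q] (M : ChainMatrix k m) {N n : ℕ} [NeZero N]
    {v : Empty → Q} {xs : Fin N → Q} {u : Fin k → Q} {c : ℕ → Fin m → Q}
    (hu : ∀ j : Fin k, xs (Fin.ofNat N j) = u j)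
    (hc : ∀ i ≤ n, ∀ q, xs (Fin.ofNat N (chainVar k m i q)) = c i q) :
    ((M.conditions N n).foldr .imp ⊥ : Language.order.BoundedFormula Empty N).Realize v xs ↔
      ¬ (M.first.Realize (Sum.elim u (c 0)) ∧
        (∀ i < n, M.step.Realize (Sum.elim (c i) (c (i + 1)))) ∧ M.last.Realize (c n)) := by
  have hfirst : (fun a => xs (Fin.ofNat N (Sum.elim Fin.val (chainVar k m 0) a))) =
      Sum.elim u (c 0) := by
    ext (j | q)
    exacts [hu j, hc 0 n.zero_le q]
  have hstep (i : ℕ) (hi : i < n) :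
      (fun a => xs (Fin.ofNat N (Sum.elim (chainVar k m i) (chainVar k m (i + 1)) a))) =
        Sum.elim (c i) (c (i + 1)) := by
    ext (q | q)
    exacts [hc i hi.le q, hc (i + 1) hi q]
  have hlast : (fun q => xs (Fin.ofNat N (chainVar k m n q))) = c n := funext (hc n le_rfl)
  rw [BoundedFormula.realize_foldr_imp]
  simp only [conditions, List.forall_mem_cons, List.forall_mem_map, List.mem_range,
    realize_instantiate, hfirst, hlast, BoundedFormula.realize_bot, imp_false]
  rw [and_comm (a := M.last.Realize _)]
  refine not_congr (and_congr_right' (and_congr_left' (forall₂_congr fun i hi => ?_)))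
  rw [hstep i hi]

theorem realize_sentence {Q : Type*} [PartialOrder Q] [Nonempty Q] (M : ChainMatrix k m) (n : ℕ) :
    Q ⊨ M.sentence n ↔ ∃ u : Fin k → Q, ¬ ∃ c : ℕ → Fin m → Q,
      M.first.Realize (Sum.elim u (c 0)) ∧
        (∀ i < n, M.step.Realize (Sum.elim (c i) (c (i + 1)))) ∧ M.last.Realize (c n) := by
  rw [Sentence.Realize, sentence, BoundedFormula.realize_exs]
  refine exists_congr fun u => ?_
  rw [realize_allsLast, not_exists]
  constructor
  · intro h c
    obtain ⟨x, hu, hc⟩ := exists_numbering u c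
    have hx : Fin.append u (fun j => x (k + j)) = fun j : Fin (k + tailLength m n) => x j := by
      rw [← funext hu]
      exact Fin.append_castAdd_natAdd (f := fun j : Fin (k + tailLength m n) => x j)
    refine (M.realize_conditions (fun j => ?_) fun i hi q => ?_).1 (hx ▸ h _)
    · rw [Fin.val_ofNat, Nat.mod_eq_of_lt (j.isLt.trans_le (Nat.le_add_right _ _)), hu]
    · rw [Fin.val_ofNat, Nat.mod_eq_of_lt (chainVar_lt hi q), hc]
  · intro h ys
    refine (M.realize_conditions (fun j => ?_) fun _ _ _ => rfl).2
      (h fun i q => Fin.append u ys (Fin.ofNat _ (chainVar k m i q)))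
    rw [show Fin.ofNat _ j.val = Fin.castAdd (tailLength m n) j from Fin.ext <|
      Nat.mod_eq_of_lt (j.isLt.trans_le (Nat.le_add_right _ _)), Fin.append_left]

end ChainMatrix

end Matrix

section Encoding

theorem encode_sentence (φ : Language.order.Sentence) :
    Encodable.encode φ = Encodable.encode (BoundedFormula.listEncode φ) := rfl

theorem encode_list_map {β : Type*} [Encodable β] (l : List β) :
    Encodable.encode (l.map Encodable.encode) = Encodable.encode l := by
  induction l with
  | nil => rfl
  | cons b l ih => simp [Encodable.encode_list_cons, ih]

/-- The list of the codes of the symbols of a formula. -/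
def symbolCodes {N : ℕ} (φ : Language.order.BoundedFormula Empty N) : List ℕ :=
  φ.listEncode.map Encodable.encode

theorem encode_symbolCodes (φ : Language.order.Sentence) :
    Encodable.encode (symbolCodes φ) = Encodable.encode φ := by
  rw [encode_sentence, symbolCodes, encode_list_map]

variable {N : ℕ}

theorem symbolCodes_bot :
    symbolCodes (⊥ : Language.order.BoundedFormula Empty N) = [2 * (2 * (N + 2) + 1) + 1] :=
  rfl

theorem symbolCodes_imp (φ ψ : Language.order.BoundedFormula Empty N) :
    symbolCodes (φ.imp ψ) = 3 :: (symbolCodes φ ++ symbolCodes ψ) := by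
  simp [symbolCodes, BoundedFormula.listEncode]

theorem symbolCodes_all (φ : Language.order.BoundedFormula Empty (N + 1)) :
    symbolCodes φ.all = 7 :: symbolCodes φ := by
  simp [symbolCodes, BoundedFormula.listEncode]

theorem symbolCodes_ex (φ : Language.order.BoundedFormula Empty (N + 1)) :
    symbolCodes φ.ex = [3, 7, 3] ++ (symbolCodes φ ++
      (symbolCodes (⊥ : Language.order.BoundedFormula Empty (N + 1)) ++
        symbolCodes (⊥ : Language.order.BoundedFormula Empty N))) := by
  simp [BoundedFormula.ex, BoundedFormula.not, symbolCodes_imp, symbolCodes_all]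

/-- The code of the `j`-th of `N` bound variables as a symbol. -/
def variableCode (N j : ℕ) : ℕ := 2 * Nat.pair N (Nat.pair (2 * (2 * j + 1)) 0 + 1)

theorem symbolCodes_instantiate_equal [NeZero N] {α : Type*} (f : α → ℕ) (a b : α) :
    symbolCodes (instantiate N f (.equal (.var (.inl a)) (.var (.inl b)))) =
      [variableCode N (Fin.ofNat N (f a)), variableCode N (Fin.ofNat N (f b))] := rfl

theorem symbolCodes_instantiate_le [NeZero N] {α : Type*} (f : α → ℕ) (a b : α) :
    symbolCodes (instantiate N f (.rel orderRel.le ![.var (.inl a), .var (.inl b)])) =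
      [1, 2 * (2 * N + 1) + 1, variableCode N (Fin.ofNat N (f a)),
        variableCode N (Fin.ofNat N (f b))] := rfl

theorem symbolCodes_foldr_imp (l : List (Language.order.BoundedFormula Empty N))
    (φ : Language.order.BoundedFormula Empty N) :
    symbolCodes (l.foldr .imp φ) = l.flatMap (fun ψ => 3 :: symbolCodes ψ) ++ symbolCodes φ := by
  induction l with
  | nil => rfl
  | cons ψ l ih => simp [symbolCodes_imp, ih]

theorem symbolCodes_allsLast {k : ℕ} (l : ℕ) (ψ : Language.order.BoundedFormula Empty (k + l)) :
    symbolCodes (BoundedFormula.allsLast l ψ) = List.replicate l 7 ++ symbolCodes ψ := by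
  induction l with
  | zero => rfl
  | succ l ih => simp [BoundedFormula.allsLast, ih, symbolCodes_all, List.replicate_succ']

theorem exists_symbolCodes_exs (k : ℕ) : ∃ l l' : List ℕ,
    ∀ φ : Language.order.BoundedFormula Empty k,
      symbolCodes φ.exs = l ++ (symbolCodes φ ++ l') := by
  induction k with
  | zero => exact ⟨[], [], fun φ => by simp [BoundedFormula.exs]⟩
  | succ k ih =>
    obtain ⟨l, l', h⟩ := ih
    exact ⟨_, _, fun φ => by
      rw [BoundedFormula.exs, h, symbolCodes_ex, List.append_assoc, ← List.append_assoc l,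
        List.append_assoc (symbolCodes φ)]⟩

theorem term_eq_var {α : Type*} (t : Language.order.Term (α ⊕ Fin 0)) : ∃ a, t = .var (.inl a) :=
  match t with
  | .var (.inl a) => ⟨a, rfl⟩
  | .func f _ => f.elim

theorem primrec_symbolCodes_instantiate {α σ : Type*} [Primcodable σ] {N : σ → ℕ}
    [∀ s, NeZero (N s)] (hN : Primrec N) {f : σ → α → ℕ} (hf : ∀ a, Primrec fun s => f s a)
    {θ : Language.order.Formula α} (hθ : BoundedFormula.IsQF θ) :
    Primrec fun s => symbolCodes (instantiate (N s) (f s) θ) := by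
  have odd {g : σ → ℕ} (hg : Primrec g) : Primrec fun s => 2 * g s + 1 :=
    Primrec.nat_double_succ.comp hg
  have hvar (a : α) : Primrec fun s => variableCode (N s) (Fin.ofNat (N s) (f s a)) :=
    Primrec.nat_double.comp <| Primrec₂.natPair.comp hN <| Primrec.succ.comp <|
      Primrec₂.natPair.comp (Primrec.nat_double.comp <| odd <| Primrec.nat_mod.comp (hf a) hN)
        (.const 0)
  induction hθ with
  | falsum =>
    exact (Primrec.list_cons.comp (odd (odd (Primrec.nat_add.comp hN (.const 2))))
      (.const [])).of_eq fun s => symbolCodes_bot.symm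
  | of_isAtomic h =>
    cases h with
    | equal t t' =>
      obtain ⟨a, rfl⟩ := term_eq_var t
      obtain ⟨b, rfl⟩ := term_eq_var t'
      exact (Primrec.list_cons.comp (hvar a) (Primrec.list_cons.comp (hvar b) (.const []))).of_eq
        fun s => (symbolCodes_instantiate_equal (f s) a b).symm
    | rel R ts =>
      cases R
      obtain ⟨a, ha⟩ := term_eq_var (ts 0)
      obtain ⟨b, hb⟩ := term_eq_var (ts 1)
      obtain rfl : ts = ![.var (.inl a), .var (.inl b)] := by
        ext i
        fin_cases i
        · exact ha
        · exact hb
      exact (Primrec.list_cons.comp (.const 1) <| Primrec.list_cons.comp (odd (odd hN)) <|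
        Primrec.list_cons.comp (hvar a) <| Primrec.list_cons.comp (hvar b) (.const [])).of_eq
        fun s => (symbolCodes_instantiate_le (f s) a b).symm
  | imp _ _ h h' =>
    simp only [instantiate, BoundedFormula.relabel_imp, symbolCodes_imp]
    exact Primrec.list_cons.comp (.const 3) (Primrec.list_append.comp h h')

theorem primrec_chainVar {k m : ℕ} (q : Fin m) : Primrec fun i => chainVar k m i q :=
  Primrec.nat_add.comp (.const k)
    (Primrec.nat_add.comp (Primrec.nat_mul.comp (.const m) .id) (.const q.val))

theorem ChainMatrix.primrec_encode_sentence {k m : ℕ} (M : ChainMatrix k m) :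
    Primrec fun n => Encodable.encode (M.sentence n) := by
  have hl : Primrec (tailLength m) :=
    Primrec.succ.comp (Primrec.nat_mul.comp (.const m) .succ)
  have hN : Primrec fun n => k + tailLength m n := Primrec.nat_add.comp (.const k) hl
  have hreplicate : Primrec fun n => List.replicate (tailLength m n) 7 :=
    (Primrec.list_map (Primrec.list_range.comp hl) (g := fun _ _ => 7) (Primrec.const 7)).of_eq
      fun n => by simp [List.map_const']
  have hfirst := primrec_symbolCodes_instantiate hN
    (f := fun _ => Sum.elim Fin.val (chainVar k m 0)) (fun a => .const _) M.isQF_first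
  have hlast := primrec_symbolCodes_instantiate hN (primrec_chainVar (k := k)) M.isQF_last
  have hstep := primrec_symbolCodes_instantiate (σ := ℕ × ℕ) (hN.comp .fst)
    (f := fun s => Sum.elim (chainVar k m s.2) (chainVar k m (s.2 + 1)))
    (Sum.rec (fun q => (primrec_chainVar q).comp .snd)
      fun q => (primrec_chainVar q).comp (Primrec.succ.comp .snd)) M.isQF_step
  obtain ⟨l, l', h⟩ := exists_symbolCodes_exs k
  simp only [← encode_symbolCodes, sentence, h, symbolCodes_allsLast, symbolCodes_foldr_imp,
    conditions, List.flatMap_cons, List.flatMap_map, symbolCodes_bot]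
  have cons {g : ℕ → List ℕ} (hg : Primrec g) : Primrec fun n => 3 :: g n :=
    Primrec.list_cons.comp (.const 3) hg
  refine Primrec.encode.comp <| Primrec.list_append.comp (.const l) <| Primrec.list_append.comp
    (Primrec.list_append.comp hreplicate <| Primrec.list_append.comp
      (Primrec.list_append.comp (cons hfirst) <| Primrec.list_append.comp (cons hlast) <|
        Primrec.list_flatMap .list_range <| Primrec.list_cons.comp (.const 3) hstep) <|
      Primrec.list_cons.comp (Primrec.nat_double_succ.comp <| Primrec.nat_double_succ.comp <|
        Primrec.nat_add.comp hN (.const 2)) (.const [])) (.const l')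

end Encoding

theorem exists_sentences_of_isAE_of_isExChain {C : TuplePred.{u} Empty}
    {H : ℕ → TuplePred.{u} Empty} (hC : IsAE C) (hH : IsExChain H) :
    ∃ φ : ℕ → Language.order.Sentence, (Primrec fun n => Encodable.encode (φ n)) ∧
      (∀ n, IsEASentence (φ n)) ∧ ∀ (n : ℕ) (Q : Type u) [PartialOrder Q] [Nonempty Q],
        Q ⊨ φ n ↔ ¬ (C Q Empty.elim ∧ H n Q Empty.elim) := by
  obtain ⟨γ, hγ, R, hR, hC⟩ := hC
  obtain ⟨k, ⟨e⟩⟩ := Finite.exists_equiv_fin γ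
  obtain ⟨m, M, hM⟩ := IsExChain.exists_chainMatrix <|
    IsExChain.isEx_and (hR.reindex (Sum.elim Empty.elim e)) (hH.reindex Empty.elim)
  refine ⟨M.sentence, M.primrec_encode_sentence, M.isEASentence_sentence, fun n Q _ _ => ?_⟩
  have he : Function.Surjective fun u : Fin k → Q => u ∘ e := fun w => ⟨w ∘ e.symm, by ext; simp⟩
  have hempty (u : Fin k → Q) : u ∘ Empty.elim = Empty.elim := Subsingleton.elim _ _
  rw [M.realize_sentence, hC, he.forall]
  simp only [← hM, not_and, Sum.comp_elim, hempty, forall_imp_iff_exists_imp]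

end Sentences

theorem exists_code_eval_ofNat :
    ∃ c : Code, ∀ n, c.eval n = (Denumerable.ofNat Code n).eval 0 := by
  have h : Partrec fun n => (Denumerable.ofNat Code n).eval 0 :=
    Nat.Partrec.Code.eval_part.comp (Computable.ofNat Code) (Computable.const 0)
  obtain ⟨c, hc⟩ := Nat.Partrec.Code.exists_code.1 (Partrec.nat_iff.1 h)
  exact ⟨c, fun n => congrFun hc n⟩

theorem exists_primrec_sentences_iff_not_dom : ∃ φ : ℕ → Language.order.Sentence,
    (Primrec fun n => Encodable.encode (φ n)) ∧ (∀ n, IsEASentence (φ n)) ∧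
      ∀ n, (∀ (Q : Type u) [PartialOrder Q], Finite Q → IsNiceBipartitePoset Q → Q ⊨ φ n) ↔
        ¬ ((Denumerable.ofNat Code n).eval 0).Dom := by
  obtain ⟨c, hc⟩ := exists_code_eval_ofNat
  obtain ⟨φ, hφ, hEA, h⟩ := exists_sentences_of_isAE_of_isExChain.{u}
    (isAE_codesComputation (Encodable.encode c)) (isExChain_hasHaltingChain (Encodable.encode c) c)
  refine ⟨φ, hφ, hEA, fun n => ?_⟩
  rw [← hc, ← exists_nice_iff_dom.{u} (c := c) le_rfl]
  push Not
  refine forall₂_congr fun Q _ => forall₂_congr fun _ hQ => ?_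
  have : Nonempty Q := ⟨hQ.2.1.choose⟩
  rw [h, not_and]

end PosetCoding

/-- **Theorem (Statement 3).** The `∃∀`-theory of finite nice bipartite posets is
undecidable: the set of `∃∀`-sentences in the language of posets that are true in
every finite nice bipartite poset is not decidable. -/
theorem ea_theory_of_finite_nice_bipartite_posets_undecidable :
    ¬ ∃ f : ℕ → Bool, Computable f ∧
      ∀ φ : Language.order.Sentence,
        f (Encodable.encode φ) = true ↔
          (IsEASentence φ ∧
            ∀ (Q : Type u) [PartialOrder Q], Finite Q → IsNiceBipartitePoset Q → Q ⊨ φ) := by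
  rintro ⟨f, hf, h⟩
  obtain ⟨φ, hφ, hEA, hdom⟩ := PosetCoding.exists_primrec_sentences_iff_not_dom.{u}
  have hhalt (c : Nat.Partrec.Code) :
      f (Encodable.encode (φ (Encodable.encode c))) = true ↔ ¬ (c.eval 0).Dom := by
    rw [h, and_iff_right (hEA _), hdom, Denumerable.ofNat_encode]
  refine ComputablePred.halting_problem 0 (ComputablePred.computable_iff.2
    ⟨fun c => !f (Encodable.encode (φ (Encodable.encode c))), ?_, ?_⟩)
  · exact Primrec.not.to_comp.comp (hf.comp (hφ.to_comp.comp Computable.encode))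
  · ext c
    rw [Bool.not_eq_true', ← Bool.not_eq_true, hhalt, not_not]
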